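/- Every strongly edge decomposable simplicial complex is Cohen–Macaulay and has the strong Lefschetz property over any infinite field K (of arbitrary characteristic). -/

import Mathlib

/-! Combinatorics of simplicial complexes on subsets of ℕ (vertex set `[n] = Finset.Icc 1 n`). -/

/-- `Γ` is a simplicial complex on the vertex set `V`. -/
def SimplicialComplexOn (V : Finset ℕ) (Γ : Set (Finset ℕ)) : Prop :=
  (∀ F ∈ Γ, F ⊆ V) ∧ (∀ v ∈ V, ({v} : Finset ℕ) ∈ Γ) ∧
    (∀ F ∈ Γ, ∀ G, G ⊆ F → G ∈ Γ)

/-- The dimension of a simplicial complex, as an integer (`dim Γ = max {|F| - 1 : F ∈ Γ}`). -/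
noncomputable def sdim (Γ : Set (Finset ℕ)) : ℤ :=
  sSup ((fun F : Finset ℕ => (F.card : ℤ) - 1) '' Γ)

/-- A facet of `Γ` is a maximal face. -/
def IsFacet (Γ : Set (Finset ℕ)) (F : Finset ℕ) : Prop :=
  F ∈ Γ ∧ ∀ G ∈ Γ, F ⊆ G → F = G

/-- A complex is pure if all of its facets have the same cardinality. -/
def PureComplex (Γ : Set (Finset ℕ)) : Prop :=
  ∀ F G, IsFacet Γ F → IsFacet Γ G → F.card = G.card

/-- `fvec Γ k` is the number of faces of `Γ` of cardinality `k`, i.e. `f_{k-1}(Γ)`. -/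
noncomputable def fvec (Γ : Set (Finset ℕ)) (k : ℕ) : ℕ :=
  {F ∈ Γ | F.card = k}.ncard

/-- The `h`-vector of a `(d-1)`-dimensional complex:
`h_i = ∑_{j=0}^i (-1)^{i-j} binom(d-j, d-i) f_{j-1}`. -/
noncomputable def hvec (d : ℕ) (Γ : Set (Finset ℕ)) (i : ℕ) : ℤ :=
  ∑ j ∈ Finset.range (i + 1),
    (-1 : ℤ) ^ (i - j) * (Nat.choose (d - j) (d - i) : ℤ) * (fvec Γ j : ℤ)

/-- The link of `Γ` with respect to a face `F`. -/
def linkOf (Γ : Set (Finset ℕ)) (F : Finset ℕ) : Set (Finset ℕ) :=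
  {G | Disjoint G F ∧ G ∪ F ∈ Γ}

/-- The contraction of `Γ` with respect to `{i,j}`, identifying vertex `i` with `j`. -/
def contraction (Γ : Set (Finset ℕ)) (i j : ℕ) : Set (Finset ℕ) :=
  {F | F ∈ Γ ∧ i ∉ F} ∪ {G | ∃ F ∈ Γ, i ∈ F ∧ G = F.erase i ∪ {j}}

/-- The Link condition: `lk_Γ({i}) ∩ lk_Γ({j}) = lk_Γ({i,j})`. -/
def LinkCondition (Γ : Set (Finset ℕ)) (i j : ℕ) : Prop :=
  linkOf Γ {i} ∩ linkOf Γ {j} = linkOf Γ {i, j}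

open Classical in
/-- The shift operator `C_{ij}` on faces. -/
noncomputable def shiftMap (Γ : Set (Finset ℕ)) (i j : ℕ) (F : Finset ℕ) : Finset ℕ :=
  if i ∈ F ∧ j ∉ F ∧ F.erase i ∪ {j} ∉ Γ then F.erase i ∪ {j} else F

/-- `Shift_{ij}(Γ) = {C_{ij}(F) : F ∈ Γ}`. -/
noncomputable def shiftComplex (Γ : Set (Finset ℕ)) (i j : ℕ) : Set (Finset ℕ) :=
  (shiftMap Γ i j) '' Γ

/-- The join `W * Σ = {F ∪ G : F ⊆ W, G ∈ Σ}` of a vertex set with a complex. -/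
def joinW (W : Finset ℕ) (C : Set (Finset ℕ)) : Set (Finset ℕ) :=
  {H | ∃ F ⊆ W, ∃ G ∈ C, H = F ∪ G}

/-- Strong edge decomposability: boundaries of simplices and `{∅}` are strongly edge
decomposable, and recursively, a pure complex satisfying the Link condition w.r.t. an edge
`{i,j}` whose contraction and link are strongly edge decomposable is
strongly edge decomposable. -/
inductive StronglyEdgeDecomposable : Set (Finset ℕ) → Prop
  | trivialComplex : StronglyEdgeDecomposable {(∅ : Finset ℕ)}
  | simplexBoundary (V : Finset ℕ) (hV : V.Nonempty) :
      StronglyEdgeDecomposable {F | F ⊆ V ∧ F ≠ V}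
  | contract (Γ : Set (Finset ℕ)) (i j : ℕ) (hij : i < j)
      (hpure : PureComplex Γ) (hedge : ({i, j} : Finset ℕ) ∈ Γ)
      (hlc : LinkCondition Γ i j)
      (hcon : StronglyEdgeDecomposable (contraction Γ i j))
      (hlk : StronglyEdgeDecomposable (linkOf Γ {i, j})) :
      StronglyEdgeDecomposable Γ

/-- A shifted complex: `F ∈ Γ`, `i ∈ F`, `i < j`, `j ∈ V` imply `(F \ {i}) ∪ {j} ∈ Γ`. -/
def ShiftedComplex (V : Finset ℕ) (Γ : Set (Finset ℕ)) : Prop :=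
  ∀ F ∈ Γ, ∀ i ∈ F, ∀ j, i < j → j ∈ V → insert j (F.erase i) ∈ Γ

/-- A `d`-subset `F ⊆ [n]` is admissible if `n - k ∉ F` implies `[n-d+k, n-k-1] ⊆ F`. -/
def Admissible (n d : ℕ) (F : Finset ℕ) : Prop :=
  F ⊆ Finset.Icc 1 n ∧ F.card = d ∧
    ∀ k < n, (n - k) ∉ F → Finset.Icc (n - d + k) (n - k - 1) ⊆ F

/-- `Δ(n,d)`, the complex generated by all admissible `d`-subsets of `[n]`; by a theorem of
Kalai this is the symmetric algebraic shifted complex `Δˢ(C(n,d))` of the boundary complex of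
the cyclic `d`-polytope with `n` vertices. -/
def DeltaC (n d : ℕ) : Set (Finset ℕ) :=
  if d = 0 then {(∅ : Finset ℕ)} else {G | ∃ F, Admissible n d F ∧ G ⊆ F}

/-- The increasing enumeration of `V`, as a map `{1, …, |V|} → V ⊆ ℕ` (identity elsewhere). -/
noncomputable def vlabel (V : Finset ℕ) (i : ℕ) : ℕ :=
  if h : i - 1 < V.card then (((V.orderIsoOfFin rfl) ⟨i - 1, h⟩ : V) : ℕ) else i

/-- `Δ(V,d)`: the complex `Δ(|V|,d)` relabeled order-isomorphically onto the vertex set `V`. -/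
noncomputable def DeltaV (V : Finset ℕ) (d : ℕ) : Set (Finset ℕ) :=
  (fun G : Finset ℕ => G.image (vlabel V)) '' DeltaC V.card d
/-! Squeezed balls and spheres (Kalai). Monomials on `[m]` are represented as multisets. -/

/-- `U` is a shifted order ideal of monomials on `[m]`: it contains `1` and all variables
`x_1,…,x_m`, is closed under divisibility, and `u·x_i ∈ U`, `i < j ≤ m` imply `u·x_j ∈ U`.
(A monomial is encoded as the multiset of its variable indices.) -/
def IsShiftedOrderIdeal (m : ℕ) (U : Set (Multiset ℕ)) : Prop :=
  (∀ u ∈ U, ∀ i ∈ u, i ∈ Finset.Icc 1 m) ∧ (0 : Multiset ℕ) ∈ U ∧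
    (∀ i ∈ Finset.Icc 1 m, ({i} : Multiset ℕ) ∈ U) ∧
    (∀ u ∈ U, ∀ v, v ≤ u → v ∈ U) ∧
    (∀ u : Multiset ℕ, ∀ i j : ℕ, i < j → j ≤ m → (i ::ₘ u) ∈ U → (j ::ₘ u) ∈ U)

/-- For a monomial `u = x_{i_1}⋯x_{i_k}` (`i_1 ≤ … ≤ i_k`), the `(d+1)`-set
`F_d(u) = {i_1, i_1+1} ∪ {i_2+2, i_2+3} ∪ ⋯ ∪ {i_k+2(k-1), i_k+2k-1} ∪ [n+2k-d, n]`. -/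
noncomputable def Fd (n d : ℕ) (u : Multiset ℕ) : Finset ℕ :=
  (Finset.range (Multiset.card u)).biUnion
      (fun j => {(u.sort (· ≤ ·)).getD j 0 + 2 * j, (u.sort (· ≤ ·)).getD j 0 + 2 * j + 1}) ∪
    Finset.Icc (n + 2 * Multiset.card u - d) n

/-- The squeezed `d`-ball `B_d(U)`: the complex generated by `{F_d(u) : u ∈ U}`. -/
def squeezedBall (n d : ℕ) (U : Set (Multiset ℕ)) : Set (Finset ℕ) :=
  {G | ∃ u ∈ U, G ⊆ Fd n d u}

/-- The boundary of a pure `d`-dimensional complex `B`: the subcomplex generated by the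
`(d-1)`-dimensional faces (cardinality-`d` faces) contained in exactly one facet. -/
noncomputable def complexBoundary (d : ℕ) (B : Set (Finset ℕ)) : Set (Finset ℕ) :=
  {F | ∃ G, F ⊆ G ∧ G ∈ B ∧ G.card = d ∧
    {H | H ∈ B ∧ H.card = d + 1 ∧ G ⊆ H}.ncard = 1}

/-- The squeezed `(d-1)`-sphere `S_d(U) = ∂ B_d(U)`. -/
noncomputable def squeezedSphere (n d : ℕ) (U : Set (Multiset ℕ)) : Set (Finset ℕ) :=
  complexBoundary d (squeezedBall n d U)

/-! The Stanley–Reisner ideal, the degree reverse lexicographic order, initial ideals and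
generic initial ideals in the polynomial ring `K[x_1,…,x_n]`, realized as
`MvPolynomial (Fin n) K` with the variable `x_i` being `X ⟨i-1⟩`. -/

/-- The squarefree monomial `x_F = ∏_{i ∈ F} x_i` (variable `x_i`, `1 ≤ i ≤ n`, is `X ⟨i-1⟩`). -/
noncomputable def faceMonomial (K : Type*) [CommRing K] (n : ℕ) (F : Finset ℕ) :
    MvPolynomial (Fin n) K :=
  ∏ a ∈ Finset.univ.filter (fun a : Fin n => (a : ℕ) + 1 ∈ F), MvPolynomial.X a

/-- The Stanley–Reisner ideal of a complex `Γ` on `[n]`, generated by the squarefree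
monomials `x_F` with `F ⊆ [n]`, `F ∉ Γ`. -/
noncomputable def srIdeal (K : Type*) [CommRing K] (n : ℕ) (Γ : Set (Finset ℕ)) :
    Ideal (MvPolynomial (Fin n) K) :=
  Ideal.span {f | ∃ F : Finset ℕ, F ⊆ Finset.Icc 1 n ∧ F ∉ Γ ∧ f = faceMonomial K n F}

/-- The degree reverse lexicographic order (induced by `x_1 > x_2 > ⋯`, smaller index =
bigger variable): `u < v` iff `deg u < deg v`, or degrees agree and at the largest index
where `u, v` differ, `u` has the larger exponent. -/
def DegRevLexLT {σ : Type*} [LinearOrder σ] (u v : σ →₀ ℕ) : Prop :=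
  (u.sum fun _ e => e) < (v.sum fun _ e => e) ∨
    ((u.sum fun _ e => e) = (v.sum fun _ e => e) ∧
      ∃ k, v k < u k ∧ ∀ l, k < l → u l = v l)

/-- The initial ideal of `I` w.r.t. the degree reverse lexicographic order: the ideal
spanned by the leading monomials of the elements of `I`. -/
noncomputable def initialIdeal {σ : Type*} [LinearOrder σ] {K : Type*} [Field K]
    (I : Ideal (MvPolynomial σ K)) : Ideal (MvPolynomial σ K) :=
  Ideal.span {m | ∃ f ∈ I, ∃ u ∈ f.support, m = MvPolynomial.monomial u (1 : K) ∧
    ∀ v ∈ f.support, v ≠ u → DegRevLexLT v u}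

/-- The linear change of coordinates of `K[x_1,…,x_n]` associated with a matrix `M`,
`x_j ↦ ∑_i M_{ij} x_i`. -/
noncomputable def genLin {K : Type*} [CommRing K] {n : ℕ} (M : Matrix (Fin n) (Fin n) K) :
    MvPolynomial (Fin n) K →ₐ[K] MvPolynomial (Fin n) K :=
  MvPolynomial.aeval (fun j => ∑ a : Fin n, MvPolynomial.C (M a j) * MvPolynomial.X a)

/-- `J` is the generic initial ideal (w.r.t. degrevlex) of `I`: there is a nonempty Zariski
open subset `U ⊆ GL_n(K)` (the nonvanishing locus of a nonzero polynomial in the matrix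
entries) such that `in(φ(I)) = J` for every `φ ∈ U`. -/
def IsGin {K : Type*} [Field K] {n : ℕ} (I J : Ideal (MvPolynomial (Fin n) K)) : Prop :=
  ∃ p : MvPolynomial (Fin n × Fin n) K, p ≠ 0 ∧
    ∀ M : Matrix (Fin n) (Fin n) K, IsUnit M.det →
      MvPolynomial.eval (fun q => M q.1 q.2) p ≠ 0 →
      initialIdeal (Ideal.map (genLin M) I) = J

/-- The set `G(J)` of (exponent vectors of) minimal monomial generators of a monomial
ideal `J`. -/
def minimalMonomialGens {σ : Type*} {K : Type*} [Field K] (J : Ideal (MvPolynomial σ K)) :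
    Set (σ →₀ ℕ) :=
  {u | MvPolynomial.monomial u (1 : K) ∈ J ∧
    ∀ v : σ →₀ ℕ, v ≤ u → MvPolynomial.monomial v (1 : K) ∈ J → v = u}

/-- The squarefree operation `Φ` on exponent vectors:
`x_{i_1} x_{i_2} ⋯ x_{i_k} ↦ {i_1, i_2+1, …, i_k+k-1}` (`i_1 ≤ i_2 ≤ ⋯ ≤ i_k`). -/
noncomputable def sqfreeOp {n : ℕ} (u : Fin n →₀ ℕ) : Finset ℕ :=
  (List.zipWith (· + ·)
      ((u.toMultiset.map (fun a : Fin n => (a : ℕ) + 1)).sort (· ≤ ·))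
      (List.range (Multiset.card (u.toMultiset)))).toFinset

/-- `Δs` is the symmetric algebraic shifted complex of `Γ`: its Stanley–Reisner ideal is
`Φ(Gin(I_Γ))`, i.e. `Δs` consists of the `F ⊆ [n]` containing no `Φ(u)`, `u ∈ G(Gin(I_Γ))`. -/
def IsSymmetricShift (K : Type*) [Field K] (n : ℕ) (Γ Δs : Set (Finset ℕ)) : Prop :=
  ∃ J : Ideal (MvPolynomial (Fin n) K), IsGin (srIdeal K n Γ) J ∧
    Δs = {F | F ⊆ Finset.Icc 1 n ∧ ∀ u ∈ minimalMonomialGens J, ¬ sqfreeOp u ⊆ F}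

/-- The exponent vector (in `K[x_1,…,x_n]`) of a monomial given as a multiset. -/
noncomputable def multisetToExp (n : ℕ) (u : Multiset ℕ) : Fin n →₀ ℕ :=
  Finsupp.equivFunOnFinite.symm (fun a : Fin n => u.count ((a : ℕ) + 1))
/-! The exterior algebra `E = ⋀⟨e_1, e_2, …⟩` over `K`, exterior face ideals, the reverse
lexicographic order, initial ideals and exterior algebraic shifting. We realize `E` as the
exterior algebra of the `K`-module `ℕ → K`, with `e_i` the image of `Pi.single i 1`. -/

/-- The exterior algebra `⋀ (ℕ → K)` hosting all the exterior face ideals. -/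
abbrev ExtAlg (K : Type*) [Field K] := ExteriorAlgebra K (ℕ → K)

/-- The exterior monomial `e_F = e_{i_1} ∧ ⋯ ∧ e_{i_k}` for `F = {i_1 < ⋯ < i_k}`. -/
noncomputable def eMon (K : Type*) [Field K] (F : Finset ℕ) : ExtAlg K :=
  ((F.sort (· ≤ ·)).map (fun i => ExteriorAlgebra.ι K (Pi.single i (1 : K)))).prod

/-- The exterior face ideal `J_Γ` of a complex `Γ` on the vertex set `V`, generated by the
monomials `e_F` with `F ⊆ V`, `F ∉ Γ`. -/
noncomputable def extFaceIdeal (K : Type*) [Field K] (V : Finset ℕ) (Γ : Set (Finset ℕ)) :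
    Ideal (ExtAlg K) :=
  Ideal.span {x | ∃ F : Finset ℕ, F ⊆ V ∧ F ∉ Γ ∧ x = eMon K F}

/-- The alternating form computing the determinant of the coordinates indexed by `F`. -/
noncomputable def detCoeffAlt (K : Type*) [Field K] (F : Finset ℕ) :
    (ℕ → K) [⋀^Fin F.card]→ₗ[K] K :=
  (Matrix.detRowAlternating).compLinearMap
    (LinearMap.funLeft K K (fun b : Fin F.card => ((F.orderIsoOfFin rfl b : F) : ℕ)))

/-- The coefficient functional of the basis monomial `e_F`: the linear functional on the
exterior algebra giving the coefficient of `e_F` in the monomial basis expansion. -/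
noncomputable def extCoeff (K : Type*) [Field K] (F : Finset ℕ) : ExtAlg K →ₗ[K] K :=
  ExteriorAlgebra.liftAlternating
    (fun i => if h : i = F.card then (detCoeffAlt K F).domDomCongr (finCongr h.symm) else 0)

/-- The reverse lexicographic order (induced by `1 > 2 > ⋯`) on exterior monomials:
`F < G` iff `|F| < |G|`, or the cardinalities agree and the largest element of the
symmetric difference `F Δ G` belongs to `F`. -/
def RevLexLT (F G : Finset ℕ) : Prop :=
  F.card < G.card ∨ (F.card = G.card ∧
    ∃ k, k ∈ F ∧ k ∉ G ∧ ∀ l, k < l → (l ∈ F ↔ l ∈ G))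

/-- The initial ideal of an ideal `I` of the exterior algebra w.r.t. the reverse
lexicographic order: spanned by the leading monomials `e_F` of the elements of `I`. -/
noncomputable def extInitialIdeal (K : Type*) [Field K] (I : Ideal (ExtAlg K)) :
    Ideal (ExtAlg K) :=
  Ideal.span {x | ∃ y ∈ I, ∃ F : Finset ℕ, x = eMon K F ∧ extCoeff K F y ≠ 0 ∧
    ∀ G : Finset ℕ, extCoeff K G y ≠ 0 → G ≠ F → RevLexLT G F}

/-- The linear change of coordinates of `span{e_i : i ∈ V}` (identity elsewhere)
associated with a `|V| × |V|` matrix `M`. -/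
noncomputable def extLinMap (K : Type*) [Field K] (V : Finset ℕ)
    (M : Matrix (Fin V.card) (Fin V.card) K) : (ℕ → K) →ₗ[K] (ℕ → K) where
  toFun v k :=
    if h : k ∈ V then
      ∑ a : Fin V.card,
        M ((V.orderIsoOfFin rfl).symm ⟨k, h⟩) a * v ((V.orderIsoOfFin rfl a : V) : ℕ)
    else v k
  map_add' x y := by
    funext k
    by_cases h : k ∈ V <;> simp [h, mul_add, Finset.sum_add_distrib]
  map_smul' c x := by
    funext k
    by_cases h : k ∈ V <;> simp [h, Finset.mul_sum, mul_left_comm]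

/-- The algebra automorphism of the exterior algebra induced by `extLinMap`. -/
noncomputable def extAlgMap (K : Type*) [Field K] (V : Finset ℕ)
    (M : Matrix (Fin V.card) (Fin V.card) K) : ExtAlg K →ₐ[K] ExtAlg K :=
  ExteriorAlgebra.lift K ⟨(ExteriorAlgebra.ι K).comp (extLinMap K V M),
    fun _ => ExteriorAlgebra.ι_sq_zero _⟩

/-- `Δe` is the exterior algebraic shifted complex of `Γ` (as complexes on the vertex set
`V`): `J_{Δe} = Gin(J_Γ)`, where the generic initial ideal is witnessed by a nonempty
Zariski open subset of `GL(V)` (the nonvanishing locus of a nonzero polynomial in the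
matrix entries). -/
def IsExteriorShift (K : Type*) [Field K] (V : Finset ℕ) (Γ Δe : Set (Finset ℕ)) : Prop :=
  ∃ p : MvPolynomial (Fin V.card × Fin V.card) K, p ≠ 0 ∧
    ∀ M : Matrix (Fin V.card) (Fin V.card) K, IsUnit M.det →
      MvPolynomial.eval (fun q => M q.1 q.2) p ≠ 0 →
      extInitialIdeal K (Ideal.map (extAlgMap K V M) (extFaceIdeal K V Γ)) =
        extFaceIdeal K V Δe

/-- The simplicial complex on `V` whose exterior face ideal is the (monomial) ideal `J`. -/
noncomputable def complexOfExtIdeal (K : Type*) [Field K] (V : Finset ℕ)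
    (J : Ideal (ExtAlg K)) : Set (Finset ℕ) :=
  {F | F ⊆ V ∧ eMon K F ∉ J}

/-- Nongeneric exterior shifting `Δ_φ(Γ)`, defined by `J_{Δ_φ(Γ)} = in(φ(J_Γ))` for an
individual linear change of coordinates `φ` given by the matrix `M`. -/
noncomputable def DeltaPhi (K : Type*) [Field K] (V : Finset ℕ)
    (M : Matrix (Fin V.card) (Fin V.card) K) (Γ : Set (Finset ℕ)) : Set (Finset ℕ) :=
  complexOfExtIdeal K V (extInitialIdeal K (Ideal.map (extAlgMap K V M) (extFaceIdeal K V Γ)))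

/-- The shifting-theoretic upper bound relation for a `(d-1)`-dimensional complex `Γ` on the
vertex set `V`: `Δᵉ(Γ) ⊆ Δ(V,d)`. -/
def ShiftingUBR (K : Type*) [Field K] (V : Finset ℕ) (d : ℕ) (Γ : Set (Finset ℕ)) : Prop :=
  ∀ Δe, IsExteriorShift K V Γ Δe → Δe ⊆ DeltaV V d
/-! Graded pieces, linear systems of parameters, the Cohen–Macaulay property and the strong
Lefschetz property for graded quotients `A = K[x_1,…,x_n]/I`. -/

/-- The degree-`k` homogeneous component of the graded quotient `S/I` (the image of the
degree-`k` homogeneous polynomials). -/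
noncomputable def quotPiece {K : Type*} [Field K] {n : ℕ}
    (I : Ideal (MvPolynomial (Fin n) K)) (k : ℕ) :
    Submodule K (MvPolynomial (Fin n) K ⧸ I) :=
  (MvPolynomial.homogeneousSubmodule (Fin n) K k).map (Ideal.Quotient.mkₐ K I).toLinearMap

/-- `θ_1, …, θ_d` is a linear system of parameters of `S/I`: the `θ_a` are linear forms and
the quotient `S/(I + (θ_1,…,θ_d))` has Krull dimension `≤ 0`. -/
def IsLSOP {K : Type*} [Field K] {n : ℕ} (I : Ideal (MvPolynomial (Fin n) K)) (d : ℕ)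
    (θ : Fin d → MvPolynomial (Fin n) K) : Prop :=
  (∀ a, (θ a).IsHomogeneous 1) ∧
    ringKrullDim (MvPolynomial (Fin n) K ⧸ (I ⊔ Ideal.span (Set.range θ))) ≤ 0

set_option synthInstance.maxHeartbeats 1000000 in
/-- The graded quotient `A = S/I` is Cohen–Macaulay: a linear system of parameters of
length `d = dim A` forms a regular `A`-sequence. -/
def IsCMIdeal {K : Type*} [Field K] {n : ℕ} (I : Ideal (MvPolynomial (Fin n) K)) : Prop :=
  ∃ d : ℕ, ringKrullDim (MvPolynomial (Fin n) K ⧸ I) = d ∧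
    ∃ θ : Fin d → MvPolynomial (Fin n) K, IsLSOP I d θ ∧
      RingTheory.Sequence.IsRegular (MvPolynomial (Fin n) K ⧸ I)
        ((List.ofFn θ).map (⇑(Ideal.Quotient.mk I)))

/-- The graded quotient `A = S/I` has the strong Lefschetz property: `A` is Cohen–Macaulay
and there are an l.s.o.p. `θ_1, …, θ_d` (`d = dim A`) and a linear form `ω` such that
`ω^{s-2i} : (A/θA)_i → (A/θA)_{s-i}` is bijective for `0 ≤ i ≤ s/2`, where
`s = max{k : (A/θA)_k ≠ 0}`. -/
def HasSLPIdeal {K : Type*} [Field K] {n : ℕ} (I : Ideal (MvPolynomial (Fin n) K)) : Prop :=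
  IsCMIdeal I ∧
    ∃ d : ℕ, ringKrullDim (MvPolynomial (Fin n) K ⧸ I) = d ∧
      ∃ θ : Fin d → MvPolynomial (Fin n) K, IsLSOP I d θ ∧
        ∃ ω : MvPolynomial (Fin n) K, ω.IsHomogeneous 1 ∧
          ∃ s : ℕ,
            (quotPiece (I ⊔ Ideal.span (Set.range θ)) s ≠ ⊥ ∧
              ∀ k, s < k → quotPiece (I ⊔ Ideal.span (Set.range θ)) k = ⊥) ∧
            ∀ i : ℕ, 2 * i ≤ s →
              Set.BijOn
                (fun x => (Ideal.Quotient.mk (I ⊔ Ideal.span (Set.range θ)) ω) ^ (s - 2 * i) * x)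
                (quotPiece (I ⊔ Ideal.span (Set.range θ)) i)
                (quotPiece (I ⊔ Ideal.span (Set.range θ)) (s - i))

/-- A simplicial complex is Cohen–Macaulay over `K` if its Stanley–Reisner ring is. -/
def ComplexCM (K : Type*) [Field K] (n : ℕ) (Γ : Set (Finset ℕ)) : Prop :=
  IsCMIdeal (srIdeal K n Γ)

/-- A `(d-1)`-dimensional complex `Γ` has the strong Lefschetz property if `h_d(Γ) > 0` and
its Stanley–Reisner ring has the strong Lefschetz property. -/
def ComplexSLP (K : Type*) [Field K] (n d : ℕ) (Γ : Set (Finset ℕ)) : Prop :=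
  0 < hvec d Γ d ∧ HasSLPIdeal (srIdeal K n Γ)

/-- A `1`-dimensional simplicial sphere (a cycle): a complex all of whose faces are edges or
smaller, every vertex lying in exactly two edges, whose edge graph is connected. -/
def IsCycleComplex (V : Finset ℕ) (Γ : Set (Finset ℕ)) : Prop :=
  SimplicialComplexOn V Γ ∧ (∀ F ∈ Γ, F.card ≤ 2) ∧
    (∀ v ∈ V, {e | e ∈ Γ ∧ e.card = 2 ∧ v ∈ e}.ncard = 2) ∧
    ∀ u ∈ V, ∀ v ∈ V,
      Relation.ReflTransGen (fun a b : ℕ => ({a, b} : Finset ℕ) ∈ Γ) u v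

namespace StrongEdge

/-! ### Partial sums of sequences -/

/-- The sequence of partial sums of `f`. -/
def partialSums (f : ℕ → ℕ) (k : ℕ) : ℕ := ∑ j ∈ Finset.range (k + 1), f j

/-- The sequence `f` delayed by one step. -/
def delay (f : ℕ → ℕ) : ℕ → ℕ
  | 0 => 0
  | k + 1 => f k

lemma partialSums_zero (f : ℕ → ℕ) : partialSums f 0 = f 0 := by simp [partialSums]

lemma partialSums_succ (f : ℕ → ℕ) (k : ℕ) :
    partialSums f (k + 1) = partialSums f k + f (k + 1) := Finset.sum_range_succ _ _

lemma partialSums_add (f g : ℕ → ℕ) : partialSums (f + g) = partialSums f + partialSums g := by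
  ext k; simp [partialSums, Finset.sum_add_distrib]

lemma partialSums_delay (f : ℕ → ℕ) : partialSums (delay f) = delay (partialSums f) := by
  ext k
  cases k with
  | zero => simp [partialSums, delay]
  | succ k => simp [partialSums, Finset.sum_range_succ', delay]

lemma partialSums_mono : Monotone partialSums :=
  fun _ _ h _ => Finset.sum_le_sum fun j _ => h j

lemma partialSums_injective : Function.Injective partialSums := by
  intro f g h
  ext k
  cases k with
  | zero => simpa [partialSums_zero] using congrFun h 0
  | succ k =>
    have h1 := congrFun h (k + 1)
    rw [partialSums_succ, partialSums_succ, congrFun h k] at h1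
    omega

lemma iterate_partialSums_add (d : ℕ) (f g : ℕ → ℕ) :
    partialSums^[d] (f + g) = partialSums^[d] f + partialSums^[d] g := by
  induction d generalizing f g with
  | zero => rfl
  | succ d ih => simp only [Function.iterate_succ_apply, partialSums_add, ih]

lemma iterate_partialSums_delay (d : ℕ) (f : ℕ → ℕ) :
    partialSums^[d] (delay f) = delay (partialSums^[d] f) := by
  induction d generalizing f with
  | zero => rfl
  | succ d ih => simp only [Function.iterate_succ_apply, partialSums_delay, ih]

lemma iterate_partialSums_iterate_delay (d m : ℕ) (f : ℕ → ℕ) :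
    partialSums^[d] (delay^[m] f) = delay^[m] (partialSums^[d] f) := by
  induction m generalizing f with
  | zero => rfl
  | succ m ih => simp only [Function.iterate_succ_apply, ih, iterate_partialSums_delay]

lemma iterate_delay_apply (m : ℕ) (f : ℕ → ℕ) (k : ℕ) :
    delay^[m] f k = if m ≤ k then f (k - m) else 0 := by
  induction m generalizing f with
  | zero => simp
  | succ m ih =>
    rw [Function.iterate_succ_apply, ih]
    by_cases h : m ≤ k
    · obtain ⟨l, rfl⟩ := Nat.exists_eq_add_of_le h
      cases l with
      | zero => simp [delay]
      | succ l =>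
        simp only [h, if_true, show m + 1 ≤ m + (l + 1) by omega,
          show m + (l + 1) - m = l + 1 by omega, show m + (l + 1) - (m + 1) = l by omega, delay]
    · simp [h, show ¬ m + 1 ≤ k by omega]

lemma delay_mono : Monotone delay := by
  intro f g h k
  cases k with
  | zero => exact le_rfl
  | succ k => exact h k

/-! ### Polynomial families of vectors -/

lemma exists_polynomial_eval_eq {K S : Type*} [Field K] [CommRing S] [Algebra K S]
    (l : S →ₗ[K] K) (p : Polynomial S) :
    ∃ q : Polynomial K, ∀ t, q.eval t = l (p.eval (algebraMap K S t)) := by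
  refine ⟨p.sum fun i s => Polynomial.monomial i (l s), fun t => ?_⟩
  rw [Polynomial.eval_eq_sum (p := p), Polynomial.sum_def, Polynomial.sum_def,
    Polynomial.eval_finsetSum, map_sum]
  refine Finset.sum_congr rfl fun i _ => ?_
  rw [Polynomial.eval_monomial, ← map_pow, mul_comm (p.coeff i), ← Algebra.smul_def, map_smul,
    smul_eq_mul, mul_comm]

/-- If a polynomial family of vectors of a finite-dimensional space `W` spans `W` at one parameter,
then it does so at all but finitely many parameters. -/
lemma finite_setOf_not_le_span {K S ι : Type*} [Field K] [CommRing S] [Algebra K S]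
    (W : Submodule K S) [FiniteDimensional K W] (c : ι → Polynomial S)
    (hc : ∀ i t, (c i).eval (algebraMap K S t) ∈ W) (t₀ : K)
    (h : W ≤ Submodule.span K (Set.range fun i => (c i).eval (algebraMap K S t₀))) :
    {t | ¬ W ≤ Submodule.span K (Set.range fun i => (c i).eval (algebraMap K S t))}.Finite := by
  classical
  obtain ⟨κ, a, -, hspan, hli⟩ :=
    exists_linearIndependent' K fun i => (c i).eval (algebraMap K S t₀)
  have hW : Submodule.span K (Set.range ((fun i => (c i).eval (algebraMap K S t₀)) ∘ a)) = W := by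
    rw [hspan]
    exact le_antisymm (Submodule.span_le.2 (by rintro _ ⟨i, rfl⟩; exact hc i _)) h
  have hfin : Finite κ := by
    let v : κ → W := fun x => ⟨_, hc (a x) t₀⟩
    have hv : LinearIndependent K v := LinearIndependent.of_comp W.subtype hli
    exact hv.finite
  have := Fintype.ofFinite κ
  have hcard : Module.finrank K W = Fintype.card κ := by
    rw [← hW]; exact finrank_span_eq_card hli
  obtain ⟨g, hg⟩ := LinearMap.exists_leftInverse_of_injective
    (Fintype.linearCombination K ((fun i => (c i).eval (algebraMap K S t₀)) ∘ a))
    (LinearMap.ker_eq_bot.2 hli.fintypeLinearCombination_injective)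
  choose q hq using fun x y : κ =>
    exists_polynomial_eval_eq ((LinearMap.proj y).comp g) (c (a x))
  set D : Polynomial K := (Matrix.of q).det with hD
  have hDt : ∀ t, D.eval t =
      (Matrix.of fun x => g ((c (a x)).eval (algebraMap K S t))).det := by
    intro t
    rw [hD, ← Polynomial.coe_evalRingHom, RingHom.map_det]
    congr 1
    ext x y
    simp [hq]
  have hD0 : D ≠ 0 := by
    intro h0
    have := hDt t₀
    rw [h0, Polynomial.eval_zero] at this
    have h1 : (Matrix.of fun x => g ((c (a x)).eval (algebraMap K S t₀))) = 1 := by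
      ext x y
      have h2 := LinearMap.congr_fun hg (Pi.single x 1)
      rw [LinearMap.comp_apply, Fintype.linearCombination_apply_single, one_smul] at h2
      simp only [Matrix.of_apply]
      rw [Function.comp_apply] at h2
      rw [h2, LinearMap.id_apply, Matrix.one_apply, Pi.single_apply]
      simp [eq_comm]
    rw [h1, Matrix.det_one] at this
    exact zero_ne_one this
  refine (D.roots.toFinset.finite_toSet).subset fun t ht => ?_
  rw [Finset.mem_coe, Multiset.mem_toFinset, Polynomial.mem_roots hD0, Polynomial.IsRoot.def]
  by_contra hne
  apply ht
  rw [hDt] at hne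
  have hli' : LinearIndependent K fun x => (c (a x)).eval (algebraMap K S t) := by
    have := Matrix.linearIndependent_rows_of_det_ne_zero hne
    exact LinearIndependent.of_comp g this
  have hle : Submodule.span K (Set.range fun x => (c (a x)).eval (algebraMap K S t)) ≤ W :=
    Submodule.span_le.2 (by rintro _ ⟨i, rfl⟩; exact hc _ _)
  have := Submodule.eq_of_le_of_finrank_eq hle (by rw [hcard]; exact finrank_span_eq_card hli')
  rw [← this]
  exact Submodule.span_mono (by rintro _ ⟨x, rfl⟩; exact ⟨a x, rfl⟩)

end StrongEdge

namespace StrongEdge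

open MvPolynomial

/-! ### Homogeneous ideals of a polynomial ring -/

section Homogeneous

variable {σ K : Type*} [Field K]

/-- The ideal `L` contains the homogeneous components of its elements. -/
def IsGraded (L : Ideal (MvPolynomial σ K)) : Prop :=
  ∀ x ∈ L, ∀ k, homogeneousComponent k x ∈ L

lemma homogeneousComponent_mul_of_isHomogeneous {g : MvPolynomial σ K} {e : ℕ}
    (hg : g.IsHomogeneous e) (a : MvPolynomial σ K) (k : ℕ) :
    homogeneousComponent k (a * g) =
      if e ≤ k then homogeneousComponent (k - e) a * g else 0 := by
  have hcomp : ∀ i, homogeneousComponent k (homogeneousComponent i a * g) =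
      if i + e = k then homogeneousComponent i a * g else 0 := fun i => by
    rw [homogeneousComponent_of_mem
      ((homogeneousComponent_isHomogeneous i a).mul hg)]
    simp [eq_comm]
  conv_lhs => rw [← sum_homogeneousComponent a]
  rw [Finset.sum_mul, map_sum, Finset.sum_congr rfl fun i _ => hcomp i]
  split_ifs with h
  · rw [Finset.sum_eq_single (k - e)]
    · rw [if_pos (by omega)]
    · intro i _ hi
      rw [if_neg (by omega)]
    · intro hk
      rw [homogeneousComponent_eq_zero (n := k - e) (φ := a)
        (by simp only [Finset.mem_range, not_lt] at hk; omega)]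
      simp
  · refine Finset.sum_eq_zero fun i _ => if_neg (by omega)

lemma isGraded_span {G : Set (MvPolynomial σ K)} (hG : ∀ g ∈ G, ∃ e, g.IsHomogeneous e) :
    IsGraded (Ideal.span G) := by
  intro x hx k
  induction hx using Submodule.span_induction with
  | mem g hg =>
    obtain ⟨e, he⟩ := hG g hg
    rw [homogeneousComponent_of_mem he]
    split_ifs
    · exact Ideal.subset_span hg
    · exact zero_mem _
  | zero => rw [map_zero]; exact zero_mem _
  | add x y _ _ hx hy => rw [map_add]; exact add_mem hx hy
  | smul a x hx _ =>
    clear * - hx hG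
    induction hx using Submodule.span_induction generalizing a with
    | mem g hg =>
      obtain ⟨e, he⟩ := hG g hg
      rw [smul_eq_mul, homogeneousComponent_mul_of_isHomogeneous he]
      split_ifs
      · exact Ideal.mul_mem_left _ _ (Ideal.subset_span hg)
      · exact zero_mem _
    | zero => rw [smul_zero, map_zero]; exact zero_mem _
    | add x y _ _ hx hy => rw [smul_add, map_add]; exact add_mem (hx a) (hy a)
    | smul b x _ hx => rw [smul_smul]; exact hx (a * b)

lemma IsGraded.sup {L L' : Ideal (MvPolynomial σ K)} (h : IsGraded L) (h' : IsGraded L') :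
    IsGraded (L ⊔ L') := by
  intro x hx k
  obtain ⟨y, hy, z, hz, rfl⟩ := Submodule.mem_sup.1 hx
  rw [map_add]
  exact add_mem (Ideal.mem_sup_left (h y hy k)) (Ideal.mem_sup_right (h' z hz k))

lemma isGraded_span_singleton {g : MvPolynomial σ K} {e : ℕ} (hg : g.IsHomogeneous e) :
    IsGraded (Ideal.span {g}) :=
  isGraded_span fun x hx => ⟨e, by rwa [Set.mem_singleton_iff.1 hx]⟩

lemma isGraded_span_range {ι : Type*} {θ : ι → MvPolynomial σ K} {e : ℕ}
    (hθ : ∀ a, (θ a).IsHomogeneous e) : IsGraded (Ideal.span (Set.range θ)) :=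
  isGraded_span fun _ ⟨a, ha⟩ => ⟨e, ha ▸ hθ a⟩

/-- An element of an ideal generated by forms is a combination of multiples of the generators of
its own degree. -/
lemma mem_span_homogeneous_multiples {ι : Type*} {g : ι → MvPolynomial σ K} {e : ι → ℕ}
    (hg : ∀ i, (g i).IsHomogeneous (e i)) {x : MvPolynomial σ K}
    (hx : x ∈ Ideal.span (Set.range g)) (k : ℕ) :
    homogeneousComponent k x ∈ Submodule.span K (Set.range
      fun p : {p : MvPolynomial σ K × ι // e p.2 ≤ k ∧ p.1.IsHomogeneous (k - e p.2)} =>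
        p.1.1 * g p.1.2) := by
  obtain ⟨c, rfl⟩ := (Finsupp.mem_ideal_span_range_iff_exists_finsupp).1 hx
  rw [Finsupp.sum, map_sum]
  refine Submodule.sum_mem _ fun i _ => ?_
  rw [homogeneousComponent_mul_of_isHomogeneous (hg i)]
  split_ifs with h
  · exact Submodule.subset_span
      ⟨⟨(homogeneousComponent (k - e i) (c i), i), h, homogeneousComponent_isHomogeneous _ _⟩, rfl⟩
  · exact zero_mem _

/-! ### Bounds for the codimension of graded pieces -/

/-- The degree-`k` piece of `K[x]/L` is spanned by `b` elements. -/
def CodimLE (L : Ideal (MvPolynomial σ K)) (k b : ℕ) : Prop :=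
  ∃ T : Fin b → MvPolynomial σ K, (∀ a, (T a).IsHomogeneous k) ∧
    ∀ s : MvPolynomial σ K, s.IsHomogeneous k → ∃ c : Fin b → K, s - ∑ a, c a • T a ∈ L

lemma CodimLE.mono {L L' : Ideal (MvPolynomial σ K)} (hL : L ≤ L') {k b : ℕ}
    (h : CodimLE L k b) : CodimLE L' k b := by
  obtain ⟨T, hT, H⟩ := h
  exact ⟨T, hT, fun s hs => (H s hs).imp fun c hc => hL hc⟩

lemma codimLE_zero_iff {L : Ideal (MvPolynomial σ K)} {k : ℕ} :
    CodimLE L k 0 ↔ ∀ s : MvPolynomial σ K, s.IsHomogeneous k → s ∈ L := by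
  constructor
  · rintro ⟨T, -, H⟩ s hs
    obtain ⟨c, hc⟩ := H s hs
    simpa using hc
  · exact fun H => ⟨Fin.elim0, fun a => a.elim0, fun s hs => ⟨Fin.elim0, by simpa using H s hs⟩⟩

lemma codimLE_degree_zero (L : Ideal (MvPolynomial σ K)) : CodimLE L 0 1 := by
  refine ⟨fun _ => 1, fun _ => isHomogeneous_one σ K, fun s hs => ⟨fun _ => coeff 0 s, ?_⟩⟩
  have h := homogeneousComponent_eq_self hs
  rw [homogeneousComponent_zero] at h
  simp only [Finset.univ_unique, Finset.sum_const, Finset.card_singleton, one_smul,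
    smul_eq_C_mul, mul_one, h, sub_self]
  exact zero_mem _

lemma CodimLE.add {L L₁ L₂ : Ideal (MvPolynomial σ K)} {x : MvPolynomial σ K} {k b₁ b₂ : ℕ}
    (hL : IsGraded L) (hx : x.IsHomogeneous 1) (h₁ : CodimLE L₁ (k + 1) b₁) (h₂ : CodimLE L₂ k b₂)
    (hL₁ : L₁ ≤ L ⊔ Ideal.span {x}) (hL₂ : ∀ y ∈ L₂, y * x ∈ L) :
    CodimLE L (k + 1) (b₁ + b₂) := by
  obtain ⟨T₁, hT₁, H₁⟩ := h₁
  obtain ⟨T₂, hT₂, H₂⟩ := h₂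
  refine ⟨Fin.append T₁ fun a => T₂ a * x, fun a => ?_, fun s hs => ?_⟩
  · refine Fin.addCases (fun a => ?_) (fun a => ?_) a
    · rw [Fin.append_left]; exact hT₁ a
    · rw [Fin.append_right]; exact (hT₂ a).mul hx
  · obtain ⟨c₁, hc₁⟩ := H₁ s hs
    obtain ⟨l, hl, z, hz, hlz⟩ := Submodule.mem_sup.1 (hL₁ hc₁)
    obtain ⟨q, rfl⟩ := Ideal.mem_span_singleton'.1 hz
    have hhom : (s - ∑ a, c₁ a • T₁ a).IsHomogeneous (k + 1) :=
      hs.sub (IsHomogeneous.sum _ _ _ fun a _ => by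
        rw [smul_eq_C_mul]; exact (hT₁ a).C_mul _)
    have hcomp := congrArg (homogeneousComponent (k + 1)) hlz
    rw [homogeneousComponent_eq_self hhom, map_add,
      homogeneousComponent_mul_of_isHomogeneous hx, if_pos (by omega),
      Nat.add_sub_cancel] at hcomp
    obtain ⟨c₂, hc₂⟩ := H₂ _ (homogeneousComponent_isHomogeneous k q)
    refine ⟨Fin.append c₁ c₂, ?_⟩
    rw [Fin.sum_univ_add]
    simp only [Fin.append_left, Fin.append_right]
    rw [← sub_sub, ← hcomp, add_sub_assoc]
    refine add_mem (hL l hl _) ?_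
    have := hL₂ _ hc₂
    rwa [sub_mul, Finset.sum_mul, Finset.sum_congr rfl fun a _ => smul_mul_assoc _ _ _] at this

lemma CodimLE.of_surjective {L L' : Ideal (MvPolynomial σ K)} {k b : ℕ}
    (φ ψ : MvPolynomial σ K →ₐ[K] MvPolynomial σ K) (hφψ : ∀ s, φ (ψ s) = s)
    (hφ : ∀ s : MvPolynomial σ K, ∀ m, s.IsHomogeneous m → (φ s).IsHomogeneous m)
    (hψ : ∀ s : MvPolynomial σ K, ∀ m, s.IsHomogeneous m → (ψ s).IsHomogeneous m)
    (hL : L ≤ L'.comap φ) (h : CodimLE L k b) : CodimLE L' k b := by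
  obtain ⟨T, hT, H⟩ := h
  refine ⟨fun a => φ (T a), fun a => hφ _ _ (hT a), fun s hs => ?_⟩
  obtain ⟨c, hc⟩ := H (ψ s) (hψ s k hs)
  refine ⟨c, ?_⟩
  have := hL hc
  rw [Ideal.mem_comap, map_sub, map_sum, hφψ] at this
  simpa only [map_smul] using this

lemma IsHomogeneous.mem_ideal_of_le [Finite σ] {L : Ideal (MvPolynomial σ K)} {k m : ℕ}
    (h : ∀ s : MvPolynomial σ K, s.IsHomogeneous k → s ∈ L) (hkm : k ≤ m)
    {s : MvPolynomial σ K} (hs : s.IsHomogeneous m) : s ∈ L := by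
  rw [s.as_sum]
  refine Ideal.sum_mem _ fun u hu => ?_
  have hdeg : u.degree = m := by
    by_contra hne
    exact (mem_support_iff.1 hu) (hs.coeff_eq_zero hne)
  obtain ⟨v, hv, hvk⟩ : ∃ v ≤ u, v.degree = k := by
    clear hu hs s
    induction hn : m - k generalizing u m with
    | zero => exact ⟨u, le_rfl, by omega⟩
    | succ r ih =>
      have hne : u ≠ 0 := by
        rintro rfl
        simp at hdeg
        omega
      obtain ⟨i, hi⟩ := Finsupp.ne_iff.1 hne
      have hle : Finsupp.single i 1 ≤ u := by
        rw [Finsupp.single_le_iff]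
        exact Nat.one_le_iff_ne_zero.2 (by simpa using hi)
      have hd : (u - Finsupp.single i 1).degree = m - 1 := by
        have := congrArg Finsupp.degree (tsub_add_cancel_of_le hle)
        rw [map_add, Finsupp.degree_single] at this
        omega
      obtain ⟨v, hv, hvk⟩ := ih (m := m - 1) (by omega) _ hd (by omega)
      exact ⟨v, hv.trans tsub_le_self, hvk⟩
  rw [← add_tsub_cancel_of_le hv, ← one_mul (coeff _ s), ← monomial_mul]
  exact Ideal.mul_mem_right _ _ (h _ (isHomogeneous_monomial _ hvk))

/-- The bound on the codimension persists for all but finitely many members of a polynomial family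
of graded ideals. -/
lemma finite_setOf_not_codimLE [Finite σ] {ι : Type*} (g : ι → Polynomial (MvPolynomial σ K))
    (e : ι → ℕ) (hg : ∀ i t, ((g i).eval (C t)).IsHomogeneous (e i)) (t₀ : K) (k b : ℕ)
    (h : CodimLE (Ideal.span (Set.range fun i => (g i).eval (C t₀))) k b) :
    {t | ¬ CodimLE (Ideal.span (Set.range fun i => (g i).eval (C t))) k b}.Finite := by
  obtain ⟨T, hT, H⟩ := h
  let ι' := {p : MvPolynomial σ K × ι // e p.2 ≤ k ∧ p.1.IsHomogeneous (k - e p.2)}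
  let c : Fin b ⊕ ι' → Polynomial (MvPolynomial σ K) :=
    Sum.elim (fun a => Polynomial.C (T a)) fun p => Polynomial.C p.1.1 * g p.1.2
  have : FiniteDimensional K (homogeneousSubmodule σ K k) :=
    Module.Finite.iff_fg.2 (homogeneousSubmodule_fg σ K k)
  have key := finite_setOf_not_le_span (homogeneousSubmodule σ K k) c ?_ t₀ ?_
  · refine key.subset fun t ht hle => ht ⟨T, hT, fun s hs => ?_⟩
    have hspan : Submodule.span K (Set.range fun i => (c i).eval (C t)) ≤
        Submodule.span K (Set.range T) ⊔
          (Ideal.span (Set.range fun i => (g i).eval (C t))).restrictScalars K := by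
      refine Submodule.span_le.2 ?_
      rintro _ ⟨a | p, rfl⟩
      · simp only [c, Sum.elim_inl, Polynomial.eval_C]
        exact Submodule.mem_sup_left (Submodule.subset_span ⟨a, rfl⟩)
      · simp only [c, Sum.elim_inr, Polynomial.eval_mul, Polynomial.eval_C]
        exact Submodule.mem_sup_right
          (Ideal.mul_mem_left _ _ (Ideal.subset_span ⟨p.1.2, rfl⟩))
    obtain ⟨y, hy, z, hz, rfl⟩ := Submodule.mem_sup.1 (hspan (hle hs))
    obtain ⟨r, rfl⟩ := (Submodule.mem_span_range_iff_exists_fun K).1 hy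
    exact ⟨r, by simpa using hz⟩
  · rintro (a | p) t
    · simpa [c] using hT a
    · have := p.2.2.mul (hg p.1.2 t)
      rw [Nat.sub_add_cancel p.2.1] at this
      simpa [c] using this
  · intro s hs
    obtain ⟨r, hr⟩ := H s hs
    have hhom : (∑ a, r a • T a).IsHomogeneous k :=
      IsHomogeneous.sum _ _ _ fun a _ => by
        rw [smul_eq_C_mul]; exact (hT a).C_mul _
    have h1 := mem_span_homogeneous_multiples (fun i => hg i t₀) hr k
    rw [homogeneousComponent_eq_self (IsHomogeneous.sub hs hhom)] at h1
    rw [← sub_add_cancel s (∑ a, r a • T a)]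
    refine add_mem (Submodule.span_mono ?_ h1)
      (Submodule.sum_mem _ fun a _ => Submodule.smul_mem _ _ (Submodule.subset_span ⟨.inl a, ?_⟩))
    · rintro _ ⟨p, rfl⟩
      exact ⟨.inr p, by simp [c]⟩
    · simp [c]

end Homogeneous

end StrongEdge

namespace StrongEdge

open MvPolynomial

/-! ### Conditions on parameters -/

section Parameters

variable {σ K : Type*} [Field K] {d : ℕ}

/-- The ideal generated by `I`, the parameters `θ` and a further element `g`. -/
noncomputable def paramIdeal (I : Ideal (MvPolynomial σ K)) (θ : Fin d → MvPolynomial σ K)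
    (g : MvPolynomial σ K) : Ideal (MvPolynomial σ K) :=
  I ⊔ Ideal.span (Set.range θ) ⊔ Ideal.span {g}

lemma paramIdeal_zero (I : Ideal (MvPolynomial σ K)) (θ : Fin d → MvPolynomial σ K) :
    paramIdeal I θ 0 = I ⊔ Ideal.span (Set.range θ) := by
  simp [paramIdeal]

/-- The power of `ω` indexed by `m`, where `none` stands for the exponent `∞`. -/
def optPow {R : Type*} [CommRing R] (ω : R) (m : Option ℕ) : R := m.elim 0 (ω ^ ·)

lemma map_optPow {R S : Type*} [CommRing R] [CommRing S] (f : R →+* S) (ω : R) (m : Option ℕ) :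
    f (optPow ω m) = optPow (f ω) m := by
  cases m <;> simp [optPow]

lemma isHomogeneous_optPow {ω : MvPolynomial σ K} (hω : ω.IsHomogeneous 1) (m : Option ℕ) :
    (optPow ω m).IsHomogeneous (m.getD 0) := by
  cases m with
  | none => exact isHomogeneous_zero σ K _
  | some m => simpa [optPow] using hω.pow m

/-- A list of bounds `(m, k, b)` for the dimension of the degree-`k` piece of
`K[x]/(I + (θ) + (ω ^ m))`. -/
def Satisfies (I : Ideal (MvPolynomial σ K)) (θ : Fin d → MvPolynomial σ K)
    (ω : MvPolynomial σ K) (Q : Set (Option ℕ × ℕ × ℕ)) : Prop :=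
  ∀ q ∈ Q, CodimLE (paramIdeal I θ (optPow ω q.1)) q.2.1 q.2.2

lemma finite_setOf_not_satisfies [Finite σ] {ι : Type*} (γ : ι → Polynomial (MvPolynomial σ K))
    (hγ : ∀ i, ∃ e, ∀ t, ((γ i).eval (C t)).IsHomogeneous e)
    (Θ : Fin d → Polynomial (MvPolynomial σ K)) (Ω : Polynomial (MvPolynomial σ K))
    (hΘ : ∀ a t, ((Θ a).eval (C t)).IsHomogeneous 1) (hΩ : ∀ t, (Ω.eval (C t)).IsHomogeneous 1)
    {Q : Set (Option ℕ × ℕ × ℕ)} (hQ : Q.Finite) (t₀ : K)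
    (h : Satisfies (Ideal.span (Set.range fun i => (γ i).eval (C t₀)))
      (fun a => (Θ a).eval (C t₀)) (Ω.eval (C t₀)) Q) :
    {t | ¬ Satisfies (Ideal.span (Set.range fun i => (γ i).eval (C t)))
      (fun a => (Θ a).eval (C t)) (Ω.eval (C t)) Q}.Finite := by
  choose e he using hγ
  have hid : ∀ (t : K) (m : Option ℕ), paramIdeal (Ideal.span (Set.range fun i => (γ i).eval (C t)))
      (fun a => (Θ a).eval (C t)) (optPow (Ω.eval (C t)) m) =
      Ideal.span (Set.range fun i : (ι ⊕ Fin d) ⊕ Unit =>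
        (Sum.elim (Sum.elim γ Θ) (fun _ => optPow Ω m) i).eval (C t)) := by
    intro t m
    rw [paramIdeal, ← Ideal.span_union, ← Ideal.span_union]
    congr 1
    rw [← Polynomial.coe_evalRingHom, ← map_optPow]
    ext x
    simp only [Set.mem_union, Set.mem_range, Set.mem_singleton_iff, Sum.exists, Sum.elim_inl,
      Sum.elim_inr, exists_const, eq_comm (b := x), Polynomial.coe_evalRingHom]
  have hfin : ∀ q ∈ Q, {t | ¬ CodimLE (paramIdeal
      (Ideal.span (Set.range fun i => (γ i).eval (C t)))
      (fun a => (Θ a).eval (C t)) (optPow (Ω.eval (C t)) q.1)) q.2.1 q.2.2}.Finite := by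
    intro q hq
    have h0 := h q hq
    rw [hid] at h0
    simp only [hid]
    refine finite_setOf_not_codimLE _ (Sum.elim (Sum.elim e fun _ => 1) fun _ => q.1.getD 0)
      ?_ t₀ _ _ h0
    rintro ((i | a) | u) t
    · exact he i t
    · exact hΘ a t
    · simp only [Sum.elim_inr]
      rw [← Polynomial.coe_evalRingHom, map_optPow]
      exact isHomogeneous_optPow (hΩ t) _
  refine (hQ.biUnion hfin).subset fun t ht => ?_
  simp only [Set.mem_ofPred_eq, Satisfies] at ht
  push Not at ht
  obtain ⟨q, hq, hn⟩ := ht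
  exact Set.mem_biUnion hq hn

/-- Two sets of bounds that can be met separately can be met by the same parameters. -/
lemma exists_common_parameters [Finite σ] [Infinite K] {G₀ G₁ : Set (MvPolynomial σ K)}
    (hG₀ : ∀ g ∈ G₀, ∃ e, g.IsHomogeneous e) (hG₁ : ∀ g ∈ G₁, ∃ e, g.IsHomogeneous e)
    {θ₀ θ₁ : Fin d → MvPolynomial σ K} {ω₀ ω₁ : MvPolynomial σ K}
    (hθ₀ : ∀ a, (θ₀ a).IsHomogeneous 1) (hθ₁ : ∀ a, (θ₁ a).IsHomogeneous 1)
    (hω₀ : ω₀.IsHomogeneous 1) (hω₁ : ω₁.IsHomogeneous 1)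
    {Q₀ Q₁ : Set (Option ℕ × ℕ × ℕ)} (hQ₀ : Q₀.Finite) (hQ₁ : Q₁.Finite)
    (h₀ : Satisfies (Ideal.span G₀) θ₀ ω₀ Q₀) (h₁ : Satisfies (Ideal.span G₁) θ₁ ω₁ Q₁) :
    ∃ (θ : Fin d → MvPolynomial σ K) (ω : MvPolynomial σ K), (∀ a, (θ a).IsHomogeneous 1) ∧
      ω.IsHomogeneous 1 ∧ Satisfies (Ideal.span G₀) θ ω Q₀ ∧ Satisfies (Ideal.span G₁) θ ω Q₁ := by
  let Θ : Fin d → Polynomial (MvPolynomial σ K) := fun a =>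
    Polynomial.C (θ₀ a) + Polynomial.X * Polynomial.C (θ₁ a - θ₀ a)
  let Ω : Polynomial (MvPolynomial σ K) := Polynomial.C ω₀ + Polynomial.X * Polynomial.C (ω₁ - ω₀)
  have hΘ : ∀ a t, ((Θ a).eval (C t)).IsHomogeneous 1 := fun a t => by
    simpa [Θ] using (hθ₀ a).add (((hθ₁ a).sub (hθ₀ a)).C_mul t)
  have hΩ : ∀ t, (Ω.eval (C t)).IsHomogeneous 1 := fun t => by
    simpa [Ω] using hω₀.add ((hω₁.sub hω₀).C_mul t)
  have hf₀ := finite_setOf_not_satisfies (fun g : G₀ => Polynomial.C g.1)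
    (fun g => (hG₀ g.1 g.2).imp fun e he t => by simpa using he) Θ Ω hΘ hΩ hQ₀ 0
    (by simpa [Θ, Ω] using h₀)
  have hf₁ := finite_setOf_not_satisfies (fun g : G₁ => Polynomial.C g.1)
    (fun g => (hG₁ g.1 g.2).imp fun e he t => by simpa using he) Θ Ω hΘ hΩ hQ₁ 1
    (by simpa [Θ, Ω] using h₁)
  obtain ⟨t, ht⟩ := (hf₀.union hf₁).infinite_compl.nonempty
  simp only [Polynomial.eval_C, Subtype.range_coe_subtype, Set.mem_compl_iff, Set.mem_union,
    Set.mem_ofPred_eq, not_or, not_not] at ht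
  exact ⟨_, _, fun a => hΘ a t, hΩ t, ht.1, ht.2⟩

end Parameters

end StrongEdge

namespace StrongEdge

open MvPolynomial

/-! ### Face ideals and the contraction step for parameters -/

section FaceIdeal

variable {σ : Type*} (K : Type*) [Field K]

/-- The squarefree monomial with support `F`. -/
noncomputable def faceMon (F : Finset σ) : MvPolynomial σ K := ∏ a ∈ F, X a

/-- The Stanley–Reisner ideal of a family of sets, generated by the monomials of its nonmembers. -/
noncomputable def faceIdeal (Γ : Set (Finset σ)) : Ideal (MvPolynomial σ K) :=
  Ideal.span (faceMon K '' Γᶜ)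

variable {K}

lemma isHomogeneous_faceMon (F : Finset σ) : (faceMon K F).IsHomogeneous F.card := by
  simpa [faceMon] using IsHomogeneous.prod F (fun a => (X a : MvPolynomial σ K)) (fun _ => 1)
    fun a _ => isHomogeneous_X K a

lemma faceMon_insert [DecidableEq σ] {i : σ} {F : Finset σ} (hi : i ∉ F) :
    faceMon K (insert i F) = X i * faceMon K F := Finset.prod_insert hi

lemma faceMon_mem_faceIdeal {Γ : Set (Finset σ)} {F : Finset σ} (hF : F ∉ Γ) :
    faceMon K F ∈ faceIdeal K Γ := Ideal.subset_span ⟨F, hF, rfl⟩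

lemma isGraded_faceIdeal (Γ : Set (Finset σ)) : IsGraded (faceIdeal K Γ) :=
  isGraded_span fun _ ⟨F, _, hF⟩ => ⟨F.card, hF ▸ isHomogeneous_faceMon F⟩

lemma faceMon_mem_span_X {i : σ} {F : Finset σ} (hi : i ∈ F) :
    faceMon K F ∈ Ideal.span {(X i : MvPolynomial σ K)} :=
  Ideal.mem_span_singleton.2 (Finset.dvd_prod_of_mem _ hi)

end FaceIdeal

section Step

variable {σ K : Type*} [Field K]

/-- The bounds on the quotient by `d` parameters expressing that its Hilbert function is at most `h`,
and that for each `i` the cokernel of the `(d - 2 * i)`-th power of the Lefschetz element vanishes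
in degree `d - i - e`. -/
def lefschetzBounds (d : ℕ) (h : ℕ → ℕ) (e : ℕ) : Set (Option ℕ × ℕ × ℕ) :=
  (fun k => (none, k, h k)) '' Set.Iic (d + 1) ∪
    (fun i => (some (d - 2 * i), d - i - e, 0)) '' {i | 2 * i ≤ d}

lemma finite_lefschetzBounds (d : ℕ) (h : ℕ → ℕ) (e : ℕ) : (lefschetzBounds d h e).Finite :=
  ((Set.finite_Iic _).image _).union
    (((Set.finite_Iic d).subset fun i hi => by
      simp only [Set.mem_ofPred_eq] at hi; simp only [Set.mem_Iic]; omega).image _)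

lemma satisfies_lefschetzBounds {d d' : ℕ} {I : Ideal (MvPolynomial σ K)}
    {θ : Fin d' → MvPolynomial σ K} {ω : MvPolynomial σ K} {h : ℕ → ℕ} {e : ℕ} :
    Satisfies I θ ω (lefschetzBounds d h e) ↔
      (∀ k ≤ d + 1, CodimLE (I ⊔ Ideal.span (Set.range θ)) k (h k)) ∧
      ∀ i, 2 * i ≤ d → CodimLE (I ⊔ Ideal.span (Set.range θ) ⊔ Ideal.span {ω ^ (d - 2 * i)})
        (d - i - e) 0 := by
  simp only [Satisfies, lefschetzBounds, Set.mem_union, Set.mem_image, Set.mem_Iic,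
    Set.mem_ofPred_eq, or_imp, forall_and, forall_exists_index, and_imp]
  refine and_congr ?_ ?_
  · constructor
    · intro H k hk
      simpa [optPow, paramIdeal_zero] using H _ k hk rfl
    · rintro H _ k hk rfl
      simpa [optPow, paramIdeal_zero] using H k hk
  · constructor
    · intro H i hi
      simpa [optPow, paramIdeal] using H _ i hi rfl
    · rintro H _ i hi rfl
      simpa [optPow, paramIdeal] using H i hi

lemma CodimLE.of_le [Finite σ] {L : Ideal (MvPolynomial σ K)} {k m : ℕ} (h : CodimLE L k 0)
    (hkm : k ≤ m) : CodimLE L m 0 :=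
  codimLE_zero_iff.2 fun _ hs => IsHomogeneous.mem_ideal_of_le (codimLE_zero_iff.1 h) hkm hs

lemma satisfies_cone [Finite σ] {d : ℕ} {I J : Ideal (MvPolynomial σ K)} {i j : σ}
    (hIJ : I ≤ J ⊔ Ideal.span {X i} ⊔ Ideal.span {X j}) {θ : Fin d → MvPolynomial σ K}
    {ω : MvPolynomial σ K} {h : ℕ → ℕ} (hh : ∀ k, d < k → h k = 0)
    (H : Satisfies I θ ω (lefschetzBounds d h 0)) :
    Satisfies J (Fin.cons (X i) (Fin.cons (X j) θ) : Fin (d + 2) → MvPolynomial σ K) ω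
      (lefschetzBounds (d + 2) h 1) := by
  rw [satisfies_lefschetzBounds] at H ⊢
  have hle : I ⊔ Ideal.span (Set.range θ) ≤ J ⊔ Ideal.span (Set.range
      (Fin.cons (X i) (Fin.cons (X j) θ) : Fin (d + 2) → MvPolynomial σ K)) := by
    rw [Fin.range_cons, Fin.range_cons, Ideal.span_insert, Ideal.span_insert, ← sup_assoc,
      ← sup_assoc]
    exact sup_le_sup_right hIJ _
  have hvan : CodimLE (J ⊔ Ideal.span (Set.range
      (Fin.cons (X i) (Fin.cons (X j) θ) : Fin (d + 2) → MvPolynomial σ K))) (d + 1) 0 := by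
    have := (H.1 (d + 1) le_rfl).mono hle
    rwa [hh _ (by omega)] at this
  constructor
  · intro k hk
    rcases Nat.lt_or_ge (d + 1) k with hk' | hk'
    · rw [hh k (by omega)]
      exact hvan.of_le hk'.le
    · exact (H.1 k hk').mono hle
  · intro l hl
    cases l with
    | zero => exact hvan.mono le_sup_left
    | succ l =>
      have := (H.2 l (by omega)).mono (sup_le_sup_right hle _)
      convert this using 1
      · rw [show d + 2 - 2 * (l + 1) = d - 2 * l by omega]
      · omega

lemma satisfies_add {d : ℕ} {I J L : Ideal (MvPolynomial σ K)} {x : MvPolynomial σ K}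
    (hx : x.IsHomogeneous 1) (hL : IsGraded L) (hI : I ≤ L ⊔ Ideal.span {x})
    (hJ : ∀ y ∈ J, y * x ∈ L) {θ : Fin (d + 2) → MvPolynomial σ K} {ω : MvPolynomial σ K}
    (hθ : ∀ a, (θ a).IsHomogeneous 1) (hω : ω.IsHomogeneous 1) {h h' : ℕ → ℕ} (h0 : h 0 = 1)
    (H : Satisfies I θ ω (lefschetzBounds (d + 2) h 0))
    (H' : Satisfies J θ ω (lefschetzBounds (d + 2) h' 1)) :
    Satisfies L θ ω (lefschetzBounds (d + 2) (h + delay h') 0) := by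
  rw [satisfies_lefschetzBounds] at H H' ⊢
  have key : ∀ M : Ideal (MvPolynomial σ K), I ⊔ M ≤ L ⊔ M ⊔ Ideal.span {x} ∧
      ∀ y ∈ J ⊔ M, y * x ∈ L ⊔ M := fun M => by
    constructor
    · rw [sup_right_comm]; exact sup_le_sup_right hI _
    · intro y hy
      obtain ⟨a, ha, b, hb, rfl⟩ := Submodule.mem_sup.1 hy
      rw [add_mul]
      exact add_mem (Ideal.mem_sup_left (hJ a ha)) (Ideal.mem_sup_right (M.mul_mem_right _ hb))
  have hgr := hL.sup (isGraded_span_range hθ)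
  constructor
  · intro k hk
    cases k with
    | zero => simpa [h0, delay] using codimLE_degree_zero _
    | succ k =>
      exact CodimLE.add hgr hx (H.1 _ hk) (H'.1 k (by omega)) (key _).1 (key _).2
  · intro l hl
    obtain ⟨m, hm⟩ : ∃ m, d + 2 - l = m + 1 := ⟨d + 1 - l, by omega⟩
    have e1 := H.2 l hl
    have e2 := H'.2 l hl
    simp only [hm, Nat.sub_zero, Nat.add_sub_cancel] at e1 e2 ⊢
    rw [sup_assoc] at e1 e2 ⊢
    refine CodimLE.add (b₁ := 0) (b₂ := 0) ?_ hx e1 e2 (key _).1 (key _).2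
    rw [← sup_assoc]
    exact hgr.sup (isGraded_span_singleton (hω.pow _))

/-- There are linear parameters meeting the bounds given by a Hilbert function and the
Lefschetz condition. -/
def HasLefschetzParameters (K : Type*) [Field K] (Γ : Set (Finset σ)) (d : ℕ) (h : ℕ → ℕ) : Prop :=
  ∃ (θ : Fin d → MvPolynomial σ K) (ω : MvPolynomial σ K), (∀ a, (θ a).IsHomogeneous 1) ∧
    ω.IsHomogeneous 1 ∧ Satisfies (faceIdeal K Γ) θ ω (lefschetzBounds d h 0)

lemma Satisfies.of_surjective {d : ℕ} {L L' : Ideal (MvPolynomial σ K)}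
    (φ ψ : MvPolynomial σ K →ₐ[K] MvPolynomial σ K) (hφψ : ∀ s, φ (ψ s) = s)
    (hφ : ∀ s : MvPolynomial σ K, ∀ m, s.IsHomogeneous m → (φ s).IsHomogeneous m)
    (hψ : ∀ s : MvPolynomial σ K, ∀ m, s.IsHomogeneous m → (ψ s).IsHomogeneous m)
    (hL : L ≤ L'.comap φ) {θ : Fin d → MvPolynomial σ K} {ω : MvPolynomial σ K}
    {Q : Set (Option ℕ × ℕ × ℕ)} (h : Satisfies L θ ω Q) :
    Satisfies L' (fun a => φ (θ a)) (φ ω) Q := by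
  intro q hq
  refine (h q hq).of_surjective φ ψ hφψ hφ hψ ?_
  refine sup_le (sup_le ?_ ?_) ?_
  · exact hL.trans (Ideal.comap_mono (le_sup_left.trans le_sup_left))
  · rw [Ideal.span_le]
    rintro _ ⟨a, rfl⟩
    exact Ideal.mem_sup_left (Ideal.mem_sup_right (Ideal.subset_span ⟨a, rfl⟩))
  · rw [Ideal.span_le, Set.singleton_subset_iff]
    refine Ideal.mem_sup_right ?_
    have := map_optPow (φ : MvPolynomial σ K →+* MvPolynomial σ K) ω q.1
    simp only [RingHom.coe_coe] at this
    rw [this]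
    exact Ideal.mem_span_singleton_self _

lemma isHomogeneous_aeval {f : σ → MvPolynomial σ K} (hf : ∀ v, (f v).IsHomogeneous 1)
    (s : MvPolynomial σ K) (m : ℕ) (hs : s.IsHomogeneous m) : (aeval f s).IsHomogeneous m := by
  simpa using hs.aeval f hf

variable [DecidableEq σ]

/-- The data of an edge contraction `Γ ↦ C` of `i` to `j`, where `L` is the link of the edge. -/
structure IsContraction (Γ C L : Set (Finset σ)) (i j : σ) : Prop where
  ne : i ≠ j
  mem_iff : ∀ F, i ∉ F → j ∉ F → (F ∈ C ↔ F ∈ Γ)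
  insert_mem_iff : ∀ F, i ∉ F → j ∉ F → (insert j F ∈ C ↔ insert i F ∈ Γ ∨ insert j F ∈ Γ)
  notMem_of_mem : ∀ F ∈ C, i ∉ F
  mem_link_iff : ∀ F, i ∉ F → j ∉ F → (F ∈ L ↔ insert i (insert j F) ∈ Γ)
  notMem_link : ∀ F ∈ L, i ∉ F ∧ j ∉ F
  link_condition : ∀ F, i ∉ F → j ∉ F → insert i F ∈ Γ → insert j F ∈ Γ → F ∈ L

lemma HasLefschetzParameters.of_isContraction [Finite σ] [Infinite K] {Γ Δ L : Set (Finset σ)}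
    {i j : σ} (hΓ : IsContraction Γ Δ L i j) {d : ℕ} {h h' : ℕ → ℕ} (h0 : h 0 = 1)
    (hh' : ∀ k, d < k → h' k = 0) (H : HasLefschetzParameters K Δ (d + 2) h)
    (H' : HasLefschetzParameters K L d h') :
    HasLefschetzParameters K Γ (d + 2) (h + delay h') := by
  obtain ⟨θ₀, ω₀, hθ₀, hω₀, H⟩ := H
  obtain ⟨θ₁, ω₁, hθ₁, hω₁, H'⟩ := H'
  obtain ⟨θ, ω, hθ, hω, S₀, S₁⟩ := exists_common_parameters
    (G₁ := faceMon K '' {F | i ∉ F ∧ j ∉ F ∧ F ∉ L})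
    (by rintro _ ⟨F, -, rfl⟩; exact ⟨_, isHomogeneous_faceMon F⟩)
    (by rintro _ ⟨F, -, rfl⟩; exact ⟨_, isHomogeneous_faceMon F⟩)
    hθ₀ (Fin.cons (isHomogeneous_X K i) (Fin.cons (isHomogeneous_X K j) hθ₁)) hω₀ hω₁
    (finite_lefschetzBounds _ _ _) (finite_lefschetzBounds _ _ _) H
    (satisfies_cone (by
      refine Ideal.span_le.2 ?_
      rintro _ ⟨F, hF, rfl⟩
      by_cases hi : i ∈ F
      · exact Ideal.mem_sup_left (Ideal.mem_sup_right (faceMon_mem_span_X hi))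
      by_cases hj : j ∈ F
      · exact Ideal.mem_sup_right (faceMon_mem_span_X hj)
      exact Ideal.mem_sup_left (Ideal.mem_sup_left (Ideal.subset_span ⟨F, ⟨hi, hj, hF⟩, rfl⟩)))
      hh' H')
  let P : Set (Polynomial (MvPolynomial σ K)) := {p | ∃ F : Finset σ, i ∉ F ∧ j ∉ F ∧
    ((F ∉ Γ ∧ p = Polynomial.C (faceMon K F)) ∨
      (insert i F ∉ Γ ∧ insert j F ∉ Γ ∧ p = Polynomial.C (X j * faceMon K F)) ∨
      (insert i F ∉ Γ ∧ p = Polynomial.C (X i * faceMon K F)) ∨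
      (insert j F ∉ Γ ∧ p = (Polynomial.X * Polynomial.C (X j) - Polynomial.C (X i)) *
        Polynomial.C (faceMon K F)))}
  have hP : ∀ p : P, ∃ e, ∀ t : K, (p.1.eval (C t : MvPolynomial σ K)).IsHomogeneous e := by
    rintro ⟨p, F, -, -, h⟩
    have hF := isHomogeneous_faceMon (K := K) F
    rcases h with ⟨-, rfl⟩ | ⟨-, -, rfl⟩ | ⟨-, rfl⟩ | ⟨-, rfl⟩
    · exact ⟨_, fun t => by simpa using hF⟩
    · exact ⟨_, fun t => by simpa using (isHomogeneous_X K j).mul hF⟩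
    · exact ⟨_, fun t => by simpa using (isHomogeneous_X K i).mul hF⟩
    · refine ⟨1 + F.card, fun t => ?_⟩
      have h1 : (C t * X j - X i : MvPolynomial σ K).IsHomogeneous 1 :=
        ((isHomogeneous_X K j).C_mul t).sub (isHomogeneous_X K i)
      simpa only [Polynomial.eval_mul, Polynomial.eval_sub, Polynomial.eval_X,
        Polynomial.eval_C] using h1.mul hF
  have hS : Satisfies (Ideal.span (Set.range fun p : P =>
      (p.1 : Polynomial (MvPolynomial σ K)).eval (C 0))) θ ω
      (lefschetzBounds (d + 2) (h + delay h') 0) := by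
    refine satisfies_add (isHomogeneous_X K i)
      (isGraded_span (by rintro _ ⟨p, rfl⟩; exact (hP p).imp fun e he => he 0)) ?_ ?_ hθ hω h0 S₀ S₁
    · refine Ideal.span_le.2 ?_
      rintro _ ⟨F, hF, rfl⟩
      by_cases hi : i ∈ F
      · exact Ideal.mem_sup_right (faceMon_mem_span_X hi)
      refine Ideal.mem_sup_left ?_
      by_cases hj : j ∈ F
      · obtain ⟨F, hjF, rfl⟩ : ∃ F', j ∉ F' ∧ F = insert j F' :=
          ⟨F.erase j, by simp, (Finset.insert_erase hj).symm⟩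
        have hiF : i ∉ F := fun h => hi (Finset.mem_insert_of_mem h)
        rw [Set.mem_compl_iff, hΓ.insert_mem_iff F hiF hjF, not_or] at hF
        refine Ideal.subset_span ⟨⟨_, F, hiF, hjF, Or.inr (Or.inl ⟨hF.1, hF.2, rfl⟩)⟩, ?_⟩
        simp [faceMon_insert hjF]
      · rw [Set.mem_compl_iff, hΓ.mem_iff F hi hj] at hF
        exact Ideal.subset_span ⟨⟨_, F, hi, hj, Or.inl ⟨hF, rfl⟩⟩, by simp⟩
    · intro y hy
      induction hy using Submodule.span_induction with
      | mem y hy =>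
        obtain ⟨F, ⟨hi, hj, hF⟩, rfl⟩ := hy
        rw [mul_comm]
        by_cases hiF : insert i F ∈ Γ
        · have hjF : insert j F ∉ Γ := fun h => hF (hΓ.link_condition F hi hj hiF h)
          rw [← neg_mem_iff]
          exact Ideal.subset_span ⟨⟨_, F, hi, hj, Or.inr (Or.inr (Or.inr ⟨hjF, rfl⟩))⟩, by simp⟩
        · exact Ideal.subset_span ⟨⟨_, F, hi, hj, Or.inr (Or.inr (Or.inl ⟨hiF, rfl⟩))⟩, by simp⟩
      | zero => simp
      | add a b _ _ ha hb => rw [add_mul]; exact add_mem ha hb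
      | smul a b _ hb => rw [smul_eq_mul, mul_assoc]; exact Ideal.mul_mem_left _ _ hb
  have hfin := finite_setOf_not_satisfies (fun p : P => p.1) hP (fun a => Polynomial.C (θ a))
    (Polynomial.C ω) (fun a t => by simpa using hθ a) (fun t => by simpa using hω)
    (finite_lefschetzBounds _ _ _) 0 (by simpa using hS)
  obtain ⟨t, ht⟩ := (hfin.union (Set.finite_singleton 0)).infinite_compl.nonempty
  simp only [Polynomial.eval_C, Set.mem_compl_iff, Set.mem_union, Set.mem_ofPred_eq,
    Set.mem_singleton_iff, not_or, not_not] at ht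
  obtain ⟨ht, ht0⟩ := ht
  let f : σ → MvPolynomial σ K := Function.update X j (C t⁻¹ * (X j + X i))
  let g : σ → MvPolynomial σ K := Function.update X j (C t * X j - X i)
  have hf : ∀ v, (f v).IsHomogeneous 1 := fun v => by
    by_cases hv : v = j
    · subst hv
      simpa [f] using ((isHomogeneous_X K v).add (isHomogeneous_X K i)).C_mul t⁻¹
    · simpa [f, hv] using isHomogeneous_X K v
  have hg : ∀ v, (g v).IsHomogeneous 1 := fun v => by
    by_cases hv : v = j
    · subst hv
      simpa [g] using ((isHomogeneous_X K v).C_mul t).sub (isHomogeneous_X K i)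
    · simpa [g, hv] using isHomogeneous_X K v
  have hfi : aeval f (X i : MvPolynomial σ K) = X i := by simp [f, hΓ.ne]
  have hfj : aeval f (X j : MvPolynomial σ K) = C t⁻¹ * (X j + X i) := by simp [f]
  have hff : ∀ F : Finset σ, j ∉ F → aeval f (faceMon K F) = faceMon K F := fun F hF => by
    rw [faceMon, map_prod]
    refine Finset.prod_congr rfl fun a ha => ?_
    simp [f, ne_of_mem_of_not_mem ha hF]
  have htt : (C t * C t⁻¹ : MvPolynomial σ K) = 1 := by
    rw [← C_mul, mul_inv_cancel₀ ht0, C_1]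
  refine ⟨_, _, fun a => isHomogeneous_aeval hf _ _ (hθ a), isHomogeneous_aeval hf _ _ hω,
    ht.of_surjective (aeval f) (aeval g) (fun s => ?_) (isHomogeneous_aeval hf)
      (isHomogeneous_aeval hg) ?_⟩
  · rw [← AlgHom.comp_apply]
    suffices h : (aeval f).comp (aeval g) = AlgHom.id K (MvPolynomial σ K) by rw [h]; rfl
    ext1 v
    by_cases hv : v = j
    · subst hv
      have : aeval f (C t : MvPolynomial σ K) = C t := by simp
      simp only [AlgHom.comp_apply, aeval_X, g, Function.update_self, map_sub, map_mul, this, hfj,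
        hfi, AlgHom.id_apply]
      rw [← mul_assoc, htt]; ring
    · simp [g, f, hv]
  · refine Ideal.span_le.2 ?_
    have hins : ∀ {v : σ} {F : Finset σ}, v ∉ F → insert v F ∉ Γ →
        (X v * faceMon K F : MvPolynomial σ K) ∈ faceIdeal K Γ := fun {v F} hv hF => by
      rw [← faceMon_insert hv]; exact faceMon_mem_faceIdeal hF
    rintro _ ⟨⟨p, F, hi, hj, h⟩, rfl⟩
    rw [SetLike.mem_coe, Ideal.mem_comap]
    beta_reduce
    rcases h with ⟨hF, rfl⟩ | ⟨hF, hF', rfl⟩ | ⟨hF, rfl⟩ | ⟨hF, rfl⟩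
    · rw [Polynomial.eval_C, hff F hj]; exact faceMon_mem_faceIdeal hF
    · rw [Polynomial.eval_C, map_mul, hfj, hff F hj]
      rw [mul_assoc, add_mul]
      exact Ideal.mul_mem_left _ _ (add_mem (hins hj hF') (hins hi hF))
    · rw [Polynomial.eval_C, map_mul, hfi, hff F hj]
      exact hins hi hF
    · have : aeval f (C t : MvPolynomial σ K) = C t := by simp
      simp only [Polynomial.eval_mul, Polynomial.eval_sub, Polynomial.eval_X, Polynomial.eval_C,
        map_mul, map_sub, this, hfi, hfj, hff F hj]
      rw [← mul_assoc, htt, one_mul, add_sub_cancel_right]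
      exact hins hj hF

end Step

end StrongEdge

namespace StrongEdge

/-! ### Hilbert functions of face rings -/

section Hilbert

variable {σ : Type*} [Fintype σ] [DecidableEq σ]

open Classical in
/-- The exponents of degree `k` whose support is a face of `Γ`. -/
noncomputable def faceExponents (Γ : Set (Finset σ)) (k : ℕ) : Finset (σ →₀ ℕ) :=
  (Finset.univ.finsuppAntidiag k).filter fun m => m.support ∈ Γ

/-- The Hilbert function of the face ring of `Γ`. -/
noncomputable def hilb (Γ : Set (Finset σ)) (k : ℕ) : ℕ := (faceExponents Γ k).card

lemma mem_faceExponents {Γ : Set (Finset σ)} {k : ℕ} {m : σ →₀ ℕ} :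
    m ∈ faceExponents Γ k ↔ m.degree = k ∧ m.support ∈ Γ := by
  simp [faceExponents, Finset.mem_finsuppAntidiag, Finsupp.degree_eq_sum]

/-- The cone over `L` with apex `v`. -/
def coneOver (v : σ) (L : Set (Finset σ)) : Set (Finset σ) := {F | F.erase v ∈ L}

lemma hilb_coneOver {L : Set (Finset σ)} {v : σ} (hv : ∀ F ∈ L, v ∉ F) :
    hilb (coneOver v L) = partialSums (hilb L) := by
  ext k
  induction k with
  | zero =>
    rw [partialSums_zero, hilb, hilb]
    congr 1
    ext m
    simp only [mem_faceExponents, Finsupp.degree_eq_zero_iff]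
    refine and_congr_right ?_
    rintro rfl
    simp [coneOver]
  | succ k ih =>
    rw [partialSums_succ, ← ih, hilb, hilb, hilb]
    have hinj : Function.Injective fun m : σ →₀ ℕ => m + Finsupp.single v 1 :=
      fun _ _ h => add_right_cancel h
    rw [← Finset.card_image_of_injective (faceExponents (coneOver v L) k) hinj,
      ← Finset.card_union_of_disjoint]
    · congr 1
      ext m
      simp only [Finset.mem_union, Finset.mem_image, mem_faceExponents]
      constructor
      · rintro ⟨hd, hm⟩
        by_cases h0 : m v = 0
        · right
          refine ⟨hd, ?_⟩
          have : m.support.erase v = m.support := Finset.erase_eq_of_notMem (by simp [h0])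
          rw [coneOver, Set.mem_ofPred_eq, this] at hm
          exact hm
        · left
          have hle : Finsupp.single v 1 ≤ m := by
            rw [Finsupp.single_le_iff]; omega
          have hm' : m - Finsupp.single v 1 + Finsupp.single v 1 = m := tsub_add_cancel_of_le hle
          refine ⟨m - Finsupp.single v 1, ⟨?_, ?_⟩, hm'⟩
          · rw [← hm', map_add] at hd
            simpa using hd
          · have : (m - Finsupp.single v 1).support.erase v = m.support.erase v := by
              ext w
              simp only [Finset.mem_erase, Finsupp.mem_support_iff, Finsupp.tsub_apply]
              refine and_congr_right fun hw => ?_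
              simp [Ne.symm hw]
            rw [coneOver, Set.mem_ofPred_eq, this]
            exact hm
      · rintro (⟨m, ⟨hd, hm⟩, rfl⟩ | ⟨hd, hm⟩)
        · refine ⟨by simp [hd], ?_⟩
          have : (m + Finsupp.single v 1).support.erase v = m.support.erase v := by
            ext w
            simp only [Finset.mem_erase, Finsupp.mem_support_iff, Finsupp.add_apply]
            refine and_congr_right fun hw => ?_
            simp [Ne.symm hw]
          rw [coneOver, Set.mem_ofPred_eq, this]
          exact hm
        · refine ⟨hd, ?_⟩
          rw [coneOver, Set.mem_ofPred_eq, Finset.erase_eq_of_notMem (hv _ hm)]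
          exact hm
    · rw [Finset.disjoint_left]
      rintro _ hm hm'
      obtain ⟨m, -, rfl⟩ := Finset.mem_image.1 hm
      exact hv _ (mem_faceExponents.1 hm').2 (by simp)

lemma hilb_add_delay_le {Γ Δ L : Set (Finset σ)} {i j : σ} (hΓ : IsContraction Γ Δ L i j)
    (hdown : ∀ F ∈ Γ, ∀ G, G ⊆ F → G ∈ Γ) :
    hilb Δ + delay (hilb (coneOver i (coneOver j L))) ≤ hilb Γ := by
  classical
  let α : (σ →₀ ℕ) → (σ →₀ ℕ) := fun m =>
    if insert i (m.support.erase j) ∈ Γ then m.erase j + Finsupp.single i (m j) else m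
  have hij := hΓ.ne
  have hαi : ∀ m, m i = 0 → (α m) i + (α m) j = m j ∧ ∀ w, w ≠ i → w ≠ j → α m w = m w := by
    intro m hm
    simp only [α]
    split_ifs
    · refine ⟨by simp [hm, hij, hij.symm], fun w hw hw' => by simp [hw, hw']⟩
    · simp [hm]
  have hdeg : ∀ m, (α m).degree = m.degree := by
    intro m
    simp only [α]
    split_ifs
    · conv_rhs => rw [← Finsupp.erase_add_single j m]
      simp
    · rfl
  have hαinj : ∀ k, Set.InjOn α (faceExponents Δ k) := by
    intro k m hm m' hm' h
    have hm0 : m i = 0 := by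
      simpa using hΓ.notMem_of_mem _ (mem_faceExponents.1 hm).2
    have hm0' : m' i = 0 := by
      simpa using hΓ.notMem_of_mem _ (mem_faceExponents.1 hm').2
    ext w
    by_cases hw : w = i
    · rw [hw, hm0, hm0']
    by_cases hw' : w = j
    · rw [hw', ← (hαi m hm0).1, ← (hαi m' hm0').1, h]
    · rw [← (hαi m hm0).2 w hw hw', ← (hαi m' hm0').2 w hw hw', h]
  have hαmem : ∀ k, ∀ m ∈ faceExponents Δ k, α m ∈ faceExponents Γ k ∧
      (α m j ≠ 0 → insert i ((α m).support.erase j) ∉ Γ) := by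
    intro k m hm
    rw [mem_faceExponents] at hm ⊢
    obtain ⟨hd, hmΔ⟩ := hm
    have hmi : i ∉ m.support := hΓ.notMem_of_mem _ hmΔ
    refine ⟨⟨(hdeg m).trans hd, ?_⟩, ?_⟩
    · by_cases hj : j ∈ m.support
      · have hiF : i ∉ m.support.erase j := fun h => hmi (Finset.mem_of_mem_erase h)
        rw [← Finset.insert_erase hj, hΓ.insert_mem_iff _ hiF (by simp)] at hmΔ
        by_cases h : insert i (m.support.erase j) ∈ Γ
        · simp only [α, h, if_true]
          refine hdown _ h _ (Finsupp.support_add.trans ?_)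
          rw [Finsupp.support_erase]
          refine Finset.union_subset (Finset.subset_insert _ _) ?_
          exact Finsupp.support_single_subset.trans (by simp)
        · simp only [α, h, if_false]
          rw [Finset.insert_erase hj] at hmΔ
          exact hmΔ.resolve_left h
      · have h0 : m j = 0 := by simpa using hj
        have : α m = m := by
          simp only [α, h0, Finsupp.single_zero, add_zero]
          rw [Finsupp.erase_of_notMem_support hj]
          simp
        rw [this]
        exact (hΓ.mem_iff _ hmi hj).1 hmΔ
    · intro hne
      by_cases h : insert i (m.support.erase j) ∈ Γ
      · simp only [α, h, if_true] at hne
        simp [hij] at hne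
      · simpa only [α, h, if_false] using h
  have hβ : ∀ k, ∀ m ∈ faceExponents (coneOver i (coneOver j L)) k,
      insert i (insert j m.support) ∈ Γ := by
    intro k m hm
    have := (mem_faceExponents.1 hm).2
    rw [coneOver, coneOver, Set.mem_ofPred_eq, Set.mem_ofPred_eq,
      hΓ.mem_link_iff _ (by simp) (by simp)] at this
    convert this using 1
    ext w
    simp only [Finset.mem_insert, Finset.mem_erase]
    tauto
  intro k
  have hle : (faceExponents Δ k).card ≤ (faceExponents Γ k).card :=
    Finset.card_le_card_of_injOn α (fun m hm => (hαmem k m hm).1) (hαinj k)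
  cases k with
  | zero => simpa [delay, hilb] using hle
  | succ k =>
    have hinj : Function.Injective fun m : σ →₀ ℕ => m + Finsupp.single j 1 :=
      fun _ _ h => add_right_cancel h
    simp only [Pi.add_apply, delay, hilb]
    rw [← Finset.card_image_of_injOn (hαinj (k + 1)),
      ← Finset.card_image_of_injective (faceExponents (coneOver i (coneOver j L)) k) hinj,
      ← Finset.card_union_of_disjoint]
    · refine Finset.card_le_card (Finset.union_subset ?_ ?_)
      · exact Finset.image_subset_iff.2 fun m hm => (hαmem _ m hm).1
      · refine Finset.image_subset_iff.2 fun m hm => ?_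
        rw [mem_faceExponents]
        refine ⟨by simp [(mem_faceExponents.1 hm).1], hdown _ (hβ k m hm) _ ?_⟩
        refine Finsupp.support_add.trans (Finset.union_subset ?_ ?_)
        · exact (Finset.subset_insert _ _).trans (Finset.subset_insert _ _)
        · exact Finsupp.support_single_subset.trans (by simp)
    · rw [Finset.disjoint_left]
      intro a ha ha'
      obtain ⟨m, hm, rfl⟩ := Finset.mem_image.1 ha
      obtain ⟨m', hm', h⟩ := Finset.mem_image.1 ha'
      refine (hαmem _ m hm).2 (by rw [← h]; simp) ?_
      rw [← h]
      refine hdown _ (hβ k m' hm') _ (Finset.insert_subset_insert _ ?_)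
      refine (Finset.erase_subset _ _).trans (Finsupp.support_add.trans ?_)
      refine Finset.union_subset (Finset.subset_insert _ _) ?_
      exact Finsupp.support_single_subset.trans (by simp)

end Hilbert

end StrongEdge

namespace StrongEdge

open MvPolynomial

/-! ### Forms modulo an ideal containing almost all linear forms -/

section Eval

variable {σ K : Type*} [Field K]

lemma aeval_C_mul_of_isHomogeneous {s : MvPolynomial σ K} {k : ℕ} (hs : s.IsHomogeneous k)
    (c : σ → K) (x : MvPolynomial σ K) :
    aeval (fun v => C (c v) * x) s = C (eval c s) * x ^ k := by
  rw [aeval_def, eval₂_eq, eval_eq, map_sum, Finset.sum_mul]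
  refine Finset.sum_congr rfl fun m hm => ?_
  have hdeg : m.degree = k := by
    by_contra hne
    exact (mem_support_iff.1 hm) (hs.coeff_eq_zero hne)
  rw [← hdeg, Finsupp.degree_apply, ← Finset.prod_pow_eq_pow_sum, map_mul, map_prod, mul_assoc,
    ← Finset.prod_mul_distrib, algebraMap_eq]
  congr 1
  refine Finset.prod_congr rfl fun v _ => ?_
  rw [mul_pow, C_pow]

/-- If modulo `M` every variable is a multiple of `x`, then every form of degree `k` is a multiple
of `x ^ k`. -/
lemma sub_C_eval_mul_pow_mem {M : Ideal (MvPolynomial σ K)} {x : MvPolynomial σ K} {c : σ → K}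
    (hc : ∀ v, X v - C (c v) * x ∈ M) {s : MvPolynomial σ K} {k : ℕ} (hs : s.IsHomogeneous k) :
    s - C (eval c s) * x ^ k ∈ M := by
  rw [← aeval_C_mul_of_isHomogeneous hs, ← Ideal.Quotient.mk_eq_mk_iff_sub_mem]
  suffices h : Ideal.Quotient.mkₐ K M =
      (Ideal.Quotient.mkₐ K M).comp (aeval fun v => C (c v) * x) from DFunLike.congr_fun h s
  ext v
  simpa using (Ideal.Quotient.mk_eq_mk_iff_sub_mem _ _).2 (hc v)

end Eval

/-! ### Lefschetz data -/

section Data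

variable {σ : Type*} [Fintype σ] [DecidableEq σ]

/-- A sequence `h` that is symmetric of length `d`, a lower bound for the Hilbert function of the
face ring of `Γ`, and an upper bound for the Hilbert function of its quotient by suitable linear
parameters. -/
structure LefschetzData (K : Type*) [Field K] (Γ : Set (Finset σ)) (d : ℕ) (h : ℕ → ℕ) :
    Prop where
  zero : h 0 = 1
  symm : ∀ k ≤ d, h (d - k) = h k
  eq_zero : ∀ k, d < k → h k = 0
  le_hilb : partialSums^[d] h ≤ hilb Γ
  params : HasLefschetzParameters K Γ d h

variable {K : Type*} [Field K]

lemma LefschetzData.of_isContraction [Infinite K] {Γ Δ L : Set (Finset σ)} {i j : σ}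
    (hΓ : IsContraction Γ Δ L i j) (hdown : ∀ F ∈ Γ, ∀ G, G ⊆ F → G ∈ Γ) {d : ℕ} {h h' : ℕ → ℕ}
    (H : LefschetzData K Δ (d + 2) h) (H' : LefschetzData K L d h') :
    LefschetzData K Γ (d + 2) (h + delay h') where
  zero := by simp [delay, H.zero]
  symm k hk := by
    rw [Pi.add_apply, Pi.add_apply, H.symm k hk]
    congr 1
    cases k with
    | zero => simpa [delay] using H'.eq_zero (d + 1) (by omega)
    | succ k =>
      rcases Nat.lt_or_ge d k with hdk | hdk
      · obtain rfl : k = d + 1 := by omega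
        simpa [delay] using (H'.eq_zero (d + 1) (by omega)).symm
      · rw [show d + 2 - (k + 1) = d - k + 1 by omega]
        exact H'.symm k hdk
  eq_zero k hk := by
    obtain ⟨l, rfl⟩ : ∃ l, k = l + 1 := ⟨k - 1, by omega⟩
    simp [delay, H.eq_zero _ hk, H'.eq_zero l (by omega)]
  le_hilb := by
    have h1 : ∀ F ∈ L, j ∉ F := fun F hF => (hΓ.notMem_link F hF).2
    have h2 : ∀ F ∈ coneOver j L, i ∉ F := fun F hF hi =>
      (hΓ.notMem_link _ hF).1 (Finset.mem_erase.2 ⟨hΓ.ne, hi⟩)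
    refine le_trans ?_ (hilb_add_delay_le hΓ hdown)
    rw [iterate_partialSums_add, iterate_partialSums_delay, hilb_coneOver h2, hilb_coneOver h1]
    refine add_le_add H.le_hilb (delay_mono ?_)
    rw [add_comm d, Function.iterate_add_apply]
    exact partialSums_mono (partialSums_mono H'.le_hilb)
  params := .of_isContraction hΓ H.zero H'.eq_zero H.params H'.params

lemma lefschetzData_empty : LefschetzData K ({∅} : Set (Finset σ)) 0 (Pi.single 0 1) where
  zero := by simp
  symm k hk := by simp [Nat.le_zero.1 hk]
  eq_zero k hk := by simp [hk.ne']
  le_hilb k := by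
    rw [Function.iterate_zero_apply]
    cases k with
    | zero =>
      rw [Pi.single_eq_same, hilb, Nat.succ_le_iff, Finset.card_pos]
      exact ⟨0, by simp [mem_faceExponents]⟩
    | succ k => simp
  params := by
    refine ⟨Fin.elim0, 0, fun a => a.elim0, isHomogeneous_zero _ _ _, ?_⟩
    rw [satisfies_lefschetzBounds]
    constructor
    · intro k hk
      interval_cases k
      · simpa using codimLE_degree_zero _
      · simp only [Pi.single_apply, one_ne_zero, if_false]
        rw [codimLE_zero_iff]
        intro s hs
        have := sub_C_eval_mul_pow_mem (M := faceIdeal K ({∅} : Set (Finset σ))) (x := 0)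
          (c := 0) (fun v => by
            simpa [faceMon] using faceMon_mem_faceIdeal (K := K)
              (show ({v} : Finset σ) ∉ ({∅} : Set (Finset σ)) by simp)) hs
        simp only [pow_one, mul_zero, sub_zero] at this
        exact Ideal.mem_sup_left this
    · intro i hi
      rw [codimLE_zero_iff]
      intro s _
      simp

lemma hilb_powerset (V : Finset σ) :
    hilb {F : Finset σ | F ⊆ V} = partialSums^[V.card] (Pi.single 0 1) := by
  induction V using Finset.induction_on with
  | empty =>
    ext k
    rw [Finset.card_empty, Function.iterate_zero_apply, hilb]
    cases k with
    | zero =>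
      rw [Pi.single_eq_same, Finset.card_eq_one]
      refine ⟨0, ?_⟩
      ext m
      simp only [mem_faceExponents, Finset.mem_singleton, Finsupp.degree_eq_zero_iff]
      exact and_iff_left_of_imp (by rintro rfl; simp)
    | succ k =>
      rw [Pi.single_eq_of_ne (by simp), Finset.card_eq_zero, Finset.eq_empty_iff_forall_notMem]
      intro m hm
      rw [mem_faceExponents, Set.mem_ofPred_eq, Finset.subset_empty, Finsupp.support_eq_empty] at hm
      obtain ⟨hd, rfl⟩ := hm
      simp at hd
  | insert v V hv ih =>
    have : {F : Finset σ | F ⊆ insert v V} = coneOver v {F : Finset σ | F ⊆ V} := by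
      ext F
      simp [coneOver, Finset.subset_insert_iff]
    rw [this, hilb_coneOver (v := v) (L := {F | F ⊆ V}) fun F (hF : F ⊆ V) h => hv (hF h), ih, Finset.card_insert_of_notMem hv,
      Function.iterate_succ_apply']

lemma hilb_powerset_le (V : Finset σ) (k : ℕ) :
    hilb {F : Finset σ | F ⊆ V} k ≤ hilb {F : Finset σ | F ⊆ V ∧ F ≠ V} k +
      delay^[V.card] (hilb {F : Finset σ | F ⊆ V}) k := by
  let u : σ →₀ ℕ := ∑ v ∈ V, Finsupp.single v 1
  have hu : ∀ w, u w = if w ∈ V then 1 else 0 := fun w => by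
    simp [u, Finsupp.finsetSum_apply, Finsupp.single_apply]
  have hud : u.degree = V.card := by simp [u, map_sum]
  have key : ∀ m ∈ faceExponents {F : Finset σ | F ⊆ V} k, m.support ≠ V ∨
      V.card ≤ k ∧ m - u ∈ faceExponents {F : Finset σ | F ⊆ V} (k - V.card) ∧ m - u + u = m := by
    intro m hm
    by_cases hmV : m.support = V
    · right
      rw [mem_faceExponents] at hm ⊢
      have hle : u ≤ m := fun w => by
        rw [hu]
        split_ifs with hw
        · rw [← hmV, Finsupp.mem_support_iff] at hw
          omega
        · omega
      have hadd := tsub_add_cancel_of_le hle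
      have hd : (m - u).degree + V.card = k := by rw [← hud, ← map_add, hadd, hm.1]
      refine ⟨by omega, ⟨by omega, ?_⟩, hadd⟩
      exact (Finsupp.support_mono tsub_le_self).trans hm.2
    · exact Or.inl hmV
  rw [iterate_delay_apply]
  simp only [hilb]
  split_ifs with hk
  · refine le_trans (Finset.card_le_card
      (t := faceExponents {F : Finset σ | F ⊆ V ∧ F ≠ V} k ∪
        (faceExponents {F : Finset σ | F ⊆ V} (k - V.card)).image (· + u)) fun m hm => ?_) <|
      (Finset.card_union_le _ _).trans (Nat.add_le_add_left Finset.card_image_le _)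
    rw [Finset.mem_union]
    rcases key m hm with h | ⟨-, h, h'⟩
    · rw [mem_faceExponents] at hm ⊢
      exact Or.inl ⟨hm.1, hm.2, h⟩
    · exact Or.inr (Finset.mem_image.2 ⟨_, h, h'⟩)
  · refine Finset.card_le_card fun m hm => ?_
    rcases key m hm with h | ⟨h, -⟩
    · rw [mem_faceExponents] at hm ⊢
      exact ⟨hm.1, hm.2, h⟩
    · exact absurd h hk

lemma lefschetzData_simplexBoundary {V : Finset σ} {d : ℕ} (hV : V.card = d + 1) :
    LefschetzData K {F : Finset σ | F ⊆ V ∧ F ≠ V} d (fun k => if k ≤ d then 1 else 0) where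
  zero := by simp
  symm k hk := by simp [hk]
  eq_zero k hk := by simp [hk.not_ge]
  le_hilb k := by
    have h1 := hilb_powerset_le V k
    rw [hilb_powerset, hV] at h1
    have h2 : (fun k => if k ≤ d then 1 else 0) + delay^[d + 1] (partialSums (Pi.single 0 1)) =
        partialSums (Pi.single 0 1) := by
      have h3 : ∀ k, partialSums (Pi.single 0 1) k = 1 := fun k => by
        simp [partialSums]
      ext k
      simp only [Pi.add_apply, iterate_delay_apply, h3]
      split_ifs <;> omega
    have h4 := congrFun (congrArg partialSums^[d] h2) k
    rw [iterate_partialSums_add, iterate_partialSums_iterate_delay,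
      ← Function.iterate_succ_apply partialSums d, Nat.succ_eq_add_one] at h4
    simp only [Pi.add_apply] at h4
    exact Nat.le_of_add_le_add_right (h4.le.trans h1)
  params := by
    obtain ⟨v₀, hv₀⟩ : V.Nonempty := by rw [← Finset.card_pos]; omega
    have hW : (V.erase v₀).card = d := by rw [Finset.card_erase_of_mem hv₀]; omega
    let e := (V.erase v₀).equivFinOfCardEq hW
    let θ : Fin d → MvPolynomial σ K := fun a => X (e.symm a : σ) - X v₀
    refine ⟨θ, X v₀, fun a => (isHomogeneous_X K _).sub (isHomogeneous_X K _),
      isHomogeneous_X K _, ?_⟩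
    set M := faceIdeal K {F : Finset σ | F ⊆ V ∧ F ≠ V} ⊔ Ideal.span (Set.range θ) with hM
    have hXV : ∀ v ∈ V, X v - X v₀ ∈ M := by
      intro v hv
      by_cases h : v = v₀
      · simp [h]
      · refine Ideal.mem_sup_right (Ideal.subset_span ⟨e ⟨v, Finset.mem_erase.2 ⟨h, hv⟩⟩, ?_⟩)
        simp [θ]
    let c : σ → K := fun v => if v ∈ V then 1 else 0
    have hc : ∀ v, X v - C (c v) * X v₀ ∈ M := by
      intro v
      simp only [c]
      split_ifs with hv
      · simpa using hXV v hv
      · simp only [map_zero, zero_mul, sub_zero]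
        refine Ideal.mem_sup_left ?_
        simpa [faceMon] using faceMon_mem_faceIdeal (K := K)
          (show ({v} : Finset σ) ∉ {F : Finset σ | F ⊆ V ∧ F ≠ V} by simp [hv])
    have hpow : X v₀ ^ (d + 1) ∈ M := by
      have h1 : faceMon K V ∈ M := Ideal.mem_sup_left (faceMon_mem_faceIdeal (by simp))
      have h2 : Ideal.Quotient.mk M (faceMon K V) = Ideal.Quotient.mk M (X v₀ ^ (d + 1)) := by
        rw [faceMon, map_prod, map_pow, ← hV, ← Finset.prod_const]
        exact Finset.prod_congr rfl fun v hv => (Ideal.Quotient.mk_eq_mk_iff_sub_mem _ _).2 (hXV v hv)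
      rwa [← Ideal.Quotient.eq_zero_iff_mem, ← h2, Ideal.Quotient.eq_zero_iff_mem]
    rw [satisfies_lefschetzBounds, ← hM]
    constructor
    · intro k hk
      rcases Nat.lt_or_ge d k with h | h
      · obtain rfl : k = d + 1 := by omega
        rw [if_neg (by omega), codimLE_zero_iff]
        intro s hs
        have := add_mem (sub_C_eval_mul_pow_mem hc hs) (M.mul_mem_left (C (eval c s)) hpow)
        rwa [sub_add_cancel] at this
      · rw [if_pos h]
        refine ⟨fun _ => X v₀ ^ k, fun _ => by simpa using (isHomogeneous_X K v₀).pow k,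
          fun s hs => ⟨fun _ => eval c s, ?_⟩⟩
        simpa [smul_eq_C_mul] using sub_C_eval_mul_pow_mem hc hs
    · intro i hi
      rw [codimLE_zero_iff]
      intro s hs
      have := add_mem (Ideal.mem_sup_left (sub_C_eval_mul_pow_mem hc hs)) <|
        Ideal.mem_sup_right (S := M) <|
          (Ideal.span {X v₀ ^ (d - 2 * i)}).mul_mem_left (C (eval c s)) <|
            Ideal.mem_span_singleton.2 (pow_dvd_pow (X v₀) (show d - 2 * i ≤ d - i - 0 by omega))
      rwa [sub_add_cancel] at this

end Data

end StrongEdge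

namespace StrongEdge

/-! ### Contractions of complexes of sets of natural numbers -/

section Contraction

variable {Γ : Set (Finset ℕ)} {i j n : ℕ}

lemma mem_contraction {F : Finset ℕ} : F ∈ contraction Γ i j ↔
    (F ∈ Γ ∧ i ∉ F) ∨ ∃ G ∈ Γ, i ∈ G ∧ F = G.erase i ∪ {j} := Iff.rfl

lemma mem_linkOf {F G : Finset ℕ} : G ∈ linkOf Γ F ↔ Disjoint G F ∧ G ∪ F ∈ Γ := Iff.rfl

lemma isContraction_contraction (hdown : ∀ F ∈ Γ, ∀ G, G ⊆ F → G ∈ Γ) (hij : i ≠ j)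
    (hlc : LinkCondition Γ i j) :
    IsContraction Γ (contraction Γ i j) (linkOf Γ {i, j}) i j where
  ne := hij
  mem_iff F hi hj := by
    rw [mem_contraction]
    constructor
    · rintro (h | ⟨G, -, -, rfl⟩)
      · exact h.1
      · simp at hj
    · exact fun h => Or.inl ⟨h, hi⟩
  insert_mem_iff F hi hj := by
    rw [mem_contraction]
    constructor
    · rintro (h | ⟨G, hG, hiG, h⟩)
      · exact Or.inr h.1
      · refine Or.inl (hdown G hG _ (Finset.insert_subset hiG fun w hw => ?_))
        have := h ▸ Finset.mem_insert_of_mem (b := j) hw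
        simp only [Finset.mem_union, Finset.mem_erase, Finset.mem_singleton] at this
        rcases this with h | rfl
        · exact h.2
        · exact absurd hw hj
    · rintro (h | h)
      · exact Or.inr ⟨_, h, by simp, by
          rw [Finset.erase_insert hi, Finset.union_comm, ← Finset.insert_eq]⟩
      · exact Or.inl ⟨h, by simp [hij, hi]⟩
  notMem_of_mem F hF := by
    rcases mem_contraction.1 hF with h | ⟨G, -, -, rfl⟩
    · exact h.2
    · simp [hij]
  mem_link_iff F hi hj := by
    have : F ∪ {i, j} = insert i (insert j F) := by ext; simp
    rw [mem_linkOf, this]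
    exact and_iff_right (by simp [hi, hj])
  notMem_link F hF := by simpa using (mem_linkOf.1 hF).1
  link_condition F hi hj hiF hjF := by
    rw [← hlc]
    constructor
    · rw [mem_linkOf, Finset.union_comm, ← Finset.insert_eq]
      exact ⟨by simpa using hi, hiF⟩
    · rw [mem_linkOf, Finset.union_comm, ← Finset.insert_eq]
      exact ⟨by simpa using hj, hjF⟩

lemma contraction_down_closed (hdown : ∀ F ∈ Γ, ∀ G, G ⊆ F → G ∈ Γ) (hij : i ≠ j) :
    ∀ F ∈ contraction Γ i j, ∀ G, G ⊆ F → G ∈ contraction Γ i j := by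
  intro F hF G hG
  rw [mem_contraction] at hF ⊢
  rcases hF with h | ⟨F, hF, hiF, rfl⟩
  · exact Or.inl ⟨hdown F h.1 G hG, fun hi => h.2 (hG hi)⟩
  · have hGF : G.erase j ⊆ F.erase i := by
      intro w hw
      rw [Finset.mem_erase] at hw
      simpa [hw.1] using hG hw.2
    have hi : i ∉ G := fun h => by simpa [hij] using hG h
    by_cases hj : j ∈ G
    · refine Or.inr ⟨insert i (G.erase j), hdown F hF _ (Finset.insert_subset hiF
        (hGF.trans (Finset.erase_subset _ _))), by simp, ?_⟩
      rw [Finset.erase_insert (by simp [hi]), Finset.union_comm, ← Finset.insert_eq,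
        Finset.insert_erase hj]
    · rw [Finset.erase_eq_of_notMem hj] at hGF
      exact Or.inl ⟨hdown F hF G (hGF.trans (Finset.erase_subset _ _)), hi⟩

lemma linkOf_down_closed (hdown : ∀ F ∈ Γ, ∀ G, G ⊆ F → G ∈ Γ) (E : Finset ℕ) :
    ∀ F ∈ linkOf Γ E, ∀ G, G ⊆ F → G ∈ linkOf Γ E := fun _ hF _ hG =>
  ⟨Finset.disjoint_of_subset_left hG hF.1, hdown _ hF.2 _ (Finset.union_subset_union_left hG)⟩

/-! ### Euler characteristics -/

open Classical in
/-- The alternating sum of the numbers of faces of `Γ` contained in `V`. -/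
noncomputable def eulerSum (V : Finset ℕ) (Γ : Set (Finset ℕ)) : ℤ :=
  ∑ F ∈ V.powerset, if F ∈ Γ then (-1) ^ F.card else 0

lemma eulerSum_insert_insert {W : Finset ℕ} (hij : i ≠ j) (hi : i ∉ W) (hj : j ∉ W)
    (f : Finset ℕ → ℤ) : ∑ F ∈ (insert i (insert j W)).powerset, f F =
      ∑ F ∈ W.powerset, (f F + f (insert j F) + (f (insert i F) + f (insert i (insert j F)))) := by
  rw [Finset.sum_powerset_insert (by simp [hij, hi]), Finset.sum_powerset_insert hj,
    Finset.sum_powerset_insert hj, Finset.sum_add_distrib, Finset.sum_add_distrib,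
    Finset.sum_add_distrib]

lemma exists_eq_insert_insert {V : Finset ℕ} (hij : i ≠ j) (hi : i ∈ V) (hj : j ∈ V) :
    ∃ W, i ∉ W ∧ j ∉ W ∧ V = insert i (insert j W) :=
  ⟨(V.erase i).erase j, by simp, by simp, by
    rw [Finset.insert_erase (Finset.mem_erase.2 ⟨hij.symm, hj⟩), Finset.insert_erase hi]⟩

lemma IsContraction.eulerSum_eq {Δ L : Set (Finset ℕ)} (hΓ : IsContraction Γ Δ L i j)
    (hdown : ∀ F ∈ Γ, ∀ G, G ⊆ F → G ∈ Γ) {V : Finset ℕ} (hi : i ∈ V) (hj : j ∈ V) :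
    eulerSum V Γ = eulerSum V Δ := by
  classical
  obtain ⟨W, hiW, hjW, rfl⟩ := exists_eq_insert_insert hΓ.ne hi hj
  rw [eulerSum, eulerSum, eulerSum_insert_insert hΓ.ne hiW hjW,
    eulerSum_insert_insert hΓ.ne hiW hjW]
  refine Finset.sum_congr rfl fun F hF => ?_
  have hiF : i ∉ F := fun h => hiW (Finset.mem_powerset.1 hF h)
  have hjF : j ∉ F := fun h => hjW (Finset.mem_powerset.1 hF h)
  have hijF : i ∉ insert j F := by simp [hΓ.ne, hiF]
  have h1 : insert i F ∉ Δ := fun h => hΓ.notMem_of_mem _ h (by simp)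
  have h2 : insert i (insert j F) ∉ Δ := fun h => hΓ.notMem_of_mem _ h (by simp)
  have h3 : insert i (insert j F) ∈ Γ ↔ insert i F ∈ Γ ∧ insert j F ∈ Γ :=
    ⟨fun h => ⟨hdown _ h _ (Finset.insert_subset_insert _ (Finset.subset_insert _ _)),
      hdown _ h _ (Finset.subset_insert _ _)⟩,
      fun h => (hΓ.mem_link_iff F hiF hjF).1 (hΓ.link_condition F hiF hjF h.1 h.2)⟩
  rw [hΓ.mem_iff F hiF hjF, hΓ.insert_mem_iff F hiF hjF, h3, if_neg h1, if_neg h2,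
    Finset.card_insert_of_notMem hijF, Finset.card_insert_of_notMem hjF,
    Finset.card_insert_of_notMem hiF]
  by_cases hA : insert i F ∈ Γ <;> by_cases hB : insert j F ∈ Γ <;>
    simp only [hA, hB, and_true, and_false, or_true, or_false, if_true, if_false,
      and_self, or_self] <;> ring

lemma eulerSum_eq_zero_of_cone {V : Finset ℕ} (hj : j ∈ V)
    (hΓ : ∀ F, insert j F ∈ Γ ↔ F ∈ Γ) : eulerSum V Γ = 0 := by
  classical
  rw [eulerSum, ← Finset.insert_erase hj, Finset.sum_powerset_insert (by simp),
    ← Finset.sum_add_distrib]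
  refine Finset.sum_eq_zero fun F hF => ?_
  have hjF : j ∉ F := fun h => by simpa using Finset.mem_powerset.1 hF h
  rw [hΓ, Finset.card_insert_of_notMem hjF]
  split_ifs <;> ring

lemma eulerSum_singleton_empty (V : Finset ℕ) : eulerSum V {∅} = 1 := by
  classical
  rw [eulerSum, Finset.sum_eq_single ∅]
  · simp
  · intro F _ hF
    simp [hF]
  · simp

lemma eulerSum_simplexBoundary {V W : Finset ℕ} (hW : W.Nonempty) (hWV : W ⊆ V) :
    eulerSum V {F | F ⊆ W ∧ F ≠ W} = -(-1) ^ W.card := by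
  classical
  have h := Finset.sum_powerset_neg_one_pow_card_of_nonempty hW
  rw [← Finset.sum_erase_add _ _ (Finset.mem_powerset_self W)] at h
  have hs : W.powerset.erase W = V.powerset.filter (· ∈ {F | F ⊆ W ∧ F ≠ W}) := by
    ext F
    simp only [Finset.mem_filter, Finset.mem_powerset, Set.mem_ofPred_eq, Finset.mem_erase]
    exact ⟨fun h => ⟨h.2.trans hWV, h.2, h.1⟩, fun h => ⟨h.2.2, h.2.1⟩⟩
  rw [eulerSum, ← eq_neg_of_add_eq_zero_left h, hs, Finset.sum_filter]
  exact Finset.sum_congr rfl fun F _ => by congr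

/-! ### Restriction to a finite vertex type -/

/-- The vertex labelled `a + 1`. -/
def vertexEmb (n : ℕ) : Fin n ↪ ℕ where
  toFun a := a + 1
  inj' _ _ h := Fin.ext (Nat.succ_injective h)

/-- The complex `Γ`, as a family of sets of elements of `Fin n`. -/
def pullback (n : ℕ) (Γ : Set (Finset ℕ)) : Set (Finset (Fin n)) := {F | F.map (vertexEmb n) ∈ Γ}

lemma mem_pullback {F : Finset (Fin n)} : F ∈ pullback n Γ ↔ F.map (vertexEmb n) ∈ Γ := Iff.rfl

lemma exists_vertexEmb_eq {v : ℕ} (hv : v ∈ Finset.Icc 1 n) : ∃ a, vertexEmb n a = v := by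
  rw [Finset.mem_Icc] at hv
  exact ⟨⟨v - 1, by omega⟩, Nat.sub_add_cancel hv.1⟩

lemma exists_map_vertexEmb_eq {F : Finset ℕ} (hF : F ⊆ Finset.Icc 1 n) :
    ∃ G : Finset (Fin n), G.map (vertexEmb n) = F := by
  classical
  refine ⟨Finset.univ.filter fun a => vertexEmb n a ∈ F, ?_⟩
  ext v
  simp only [Finset.mem_map, Finset.mem_filter, Finset.mem_univ, true_and]
  constructor
  · rintro ⟨a, ha, rfl⟩
    exact ha
  · intro hv
    obtain ⟨a, rfl⟩ := exists_vertexEmb_eq (hF hv)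
    exact ⟨a, hv, rfl⟩

lemma IsContraction.pullback {Δ L : Set (Finset ℕ)} {a b : Fin n}
    (hΓ : IsContraction Γ Δ L (vertexEmb n a) (vertexEmb n b)) :
    IsContraction (pullback n Γ) (pullback n Δ) (pullback n L) a b where
  ne h := hΓ.ne (by rw [h])
  mem_iff F ha hb := hΓ.mem_iff _ (by simpa using ha) (by simpa using hb)
  insert_mem_iff F ha hb := by
    simp only [mem_pullback, Finset.map_insert]
    exact hΓ.insert_mem_iff _ (by simpa using ha) (by simpa using hb)
  notMem_of_mem F hF := by simpa using hΓ.notMem_of_mem _ hF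
  mem_link_iff F ha hb := by
    simp only [mem_pullback, Finset.map_insert]
    exact hΓ.mem_link_iff _ (by simpa using ha) (by simpa using hb)
  notMem_link F hF := by simpa using hΓ.notMem_link _ hF
  link_condition F ha hb haF hbF := by
    simp only [mem_pullback, Finset.map_insert] at haF hbF ⊢
    exact hΓ.link_condition _ (by simpa using ha) (by simpa using hb) haF hbF

lemma pullback_down_closed (hdown : ∀ F ∈ Γ, ∀ G, G ⊆ F → G ∈ Γ) :
    ∀ F ∈ pullback n Γ, ∀ G, G ⊆ F → G ∈ pullback n Γ :=
  fun _ hF _ hG => hdown _ hF _ (Finset.map_subset_map.2 hG)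

lemma faceIdeal_pullback (K : Type*) [Field K] : faceIdeal K (pullback n Γ) = srIdeal K n Γ := by
  have hmon : ∀ F : Finset (Fin n), faceMonomial K n (F.map (vertexEmb n)) = faceMon K F := by
    intro F
    rw [faceMonomial, faceMon]
    congr 1
    ext a
    simp only [Finset.mem_filter, Finset.mem_univ, true_and]
    exact Finset.mem_map' (vertexEmb n)
  rw [faceIdeal, srIdeal]
  congr 1
  ext f
  constructor
  · rintro ⟨F, hF, rfl⟩
    refine ⟨F.map (vertexEmb n), ?_, hF, (hmon F).symm⟩
    intro v hv
    obtain ⟨a, -, rfl⟩ := Finset.mem_map.1 hv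
    exact Finset.mem_Icc.2 ⟨Nat.le_add_left _ _, a.2⟩
  · rintro ⟨F, hF, hFΓ, rfl⟩
    obtain ⟨G, rfl⟩ := exists_map_vertexEmb_eq hF
    exact ⟨G, hFΓ, (hmon G).symm⟩

/-! ### Strongly edge decomposable complexes -/

/-- All maximal faces have `d` elements. -/
def PureOfCard (Γ : Set (Finset ℕ)) (d : ℕ) : Prop :=
  (∀ F ∈ Γ, F.card ≤ d) ∧ ∀ F ∈ Γ, ∃ G ∈ Γ, F ⊆ G ∧ G.card = d

lemma exists_facet {V : Finset ℕ} (hV : ∀ F ∈ Γ, F ⊆ V) {F : Finset ℕ} (hF : F ∈ Γ) :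
    ∃ G, IsFacet Γ G ∧ F ⊆ G := by
  have hfin : Γ.Finite := V.powerset.finite_toSet.subset fun F hF => by simpa using hV F hF
  obtain ⟨G, hFG, hG⟩ := hfin.exists_le_maximal hF
  exact ⟨G, ⟨hG.prop, fun H hH hGH => hGH.antisymm (hG.le_of_ge hH hGH)⟩, hFG⟩

lemma exists_pureOfCard {V : Finset ℕ} (hV : ∀ F ∈ Γ, F ⊆ V) (hpure : PureComplex Γ)
    (hne : Γ.Nonempty) : ∃ d, PureOfCard Γ d := by
  obtain ⟨F₀, hF₀⟩ := hne
  obtain ⟨G₀, hG₀, -⟩ := exists_facet hV hF₀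
  refine ⟨G₀.card, fun F hF => ?_, fun F hF => ?_⟩
  · obtain ⟨G, hG, hFG⟩ := exists_facet hV hF
    exact (Finset.card_le_card hFG).trans (hpure _ _ hG hG₀).le
  · obtain ⟨G, hG, hFG⟩ := exists_facet hV hF
    exact ⟨G, hG.1, hFG, hpure _ _ hG hG₀⟩

lemma PureOfCard.linkOf_pair {d d' : ℕ} (hij : i ≠ j) (hΓ : PureOfCard Γ d)
    (hL : PureOfCard (linkOf Γ {i, j}) d') (hedge : {i, j} ∈ Γ) : d = d' + 2 := by
  have hc : ({i, j} : Finset ℕ).card = 2 := Finset.card_pair hij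
  obtain ⟨F, hF, hijF, hFd⟩ := hΓ.2 _ hedge
  have h1 := hL.1 (F \ {i, j}) ⟨Finset.sdiff_disjoint, by rwa [Finset.sdiff_union_of_subset hijF]⟩
  rw [Finset.card_sdiff_of_subset hijF, hc, hFd] at h1
  obtain ⟨G, hG, -, hGd⟩ := hL.2 ∅ ⟨by simp, by simpa using hedge⟩
  have h2 := hΓ.1 _ hG.2
  rw [Finset.card_union_of_disjoint hG.1, hc, hGd] at h2
  omega

lemma PureOfCard.contraction {V : Finset ℕ} {d d' : ℕ} (hdown : ∀ F ∈ Γ, ∀ G, G ⊆ F → G ∈ Γ)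
    (hij : i ≠ j) (hj : j ∈ V) (hΓ : PureOfCard Γ d) (hC : PureOfCard (contraction Γ i j) d')
    (hedge : {i, j} ∈ Γ) (he : eulerSum V (contraction Γ i j) ≠ 0) : d' = d := by
  have h1 : d' ≤ d := by
    obtain ⟨G, hG, -, rfl⟩ := hC.2 ∅ (Or.inl ⟨hdown _ hedge _ (by simp), by simp⟩)
    rcases mem_contraction.1 hG with h | ⟨F, hF, hi, rfl⟩
    · exact hΓ.1 G h.1
    · refine (Finset.card_union_le _ _).trans ?_
      rw [Finset.card_singleton, Finset.card_erase_add_one hi]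
      exact hΓ.1 F hF
  by_contra hne
  refine he (eulerSum_eq_zero_of_cone hj fun F =>
    ⟨fun h => contraction_down_closed hdown hij _ h _ (Finset.subset_insert _ _), fun h => ?_⟩)
  have key : ∀ G ∈ Γ, G.card = d → j ∈ G := by
    intro G hG hGd
    by_contra hjG
    have hi : i ∈ G := by
      by_contra hi
      have := hC.1 G (Or.inl ⟨hG, hi⟩)
      omega
    have := hC.1 _ (Or.inr ⟨G, hG, hi, rfl⟩)
    rw [Finset.card_union_of_disjoint (by simp [hjG]), Finset.card_singleton,
      Finset.card_erase_add_one hi] at this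
    omega
  rcases mem_contraction.1 h with h | ⟨G, hG, hi, rfl⟩
  · obtain ⟨G, hG, hFG, hGd⟩ := hΓ.2 F h.1
    exact Or.inl ⟨hdown G hG _ (Finset.insert_subset (key G hG hGd) hFG), by simp [hij, h.2]⟩
  · rw [Finset.insert_eq_of_mem (by simp)]
    exact h

theorem exists_lefschetzData (K : Type*) [Field K] [Infinite K] (hΓ : StronglyEdgeDecomposable Γ)
    (hV : ∀ F ∈ Γ, F ⊆ Finset.Icc 1 n) (hdown : ∀ F ∈ Γ, ∀ G, G ⊆ F → G ∈ Γ) :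
    ∃ d h, PureOfCard Γ d ∧ eulerSum (Finset.Icc 1 n) Γ = (-1) ^ d ∧
      LefschetzData K (pullback n Γ) d h := by
  have hempty : ∃ d h, PureOfCard {∅} d ∧ eulerSum (Finset.Icc 1 n) {∅} = (-1) ^ d ∧
      LefschetzData K (pullback n {∅}) d h := by
    refine ⟨0, Pi.single 0 1, by simp [PureOfCard], by simp [eulerSum_singleton_empty], ?_⟩
    convert lefschetzData_empty (K := K) (σ := Fin n)
    ext F
    simp [mem_pullback]
  induction hΓ with
  | trivialComplex => exact hempty
  | simplexBoundary V hne =>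
    rcases Nat.lt_or_ge 1 V.card with hc | hc
    · have hVn : V ⊆ Finset.Icc 1 n := fun v hv => by
        have : ({v} : Finset ℕ) ≠ V := fun h => by simp [← h] at hc
        simpa using hV {v} ⟨by simpa using hv, this⟩
      obtain ⟨d, hd⟩ : ∃ d, V.card = d + 1 := ⟨V.card - 1, by omega⟩
      refine ⟨d, fun k => if k ≤ d then 1 else 0, ⟨fun F hF => ?_, fun F hF => ?_⟩, ?_, ?_⟩
      · have := Finset.card_lt_card (hF.1.ssubset_of_ne hF.2)
        omega
      · obtain ⟨v, hv, hvF⟩ := Finset.exists_of_ssubset (hF.1.ssubset_of_ne hF.2)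
        refine ⟨V.erase v, ⟨Finset.erase_subset _ _, fun h => ?_⟩,
          Finset.subset_erase.2 ⟨hF.1, hvF⟩, ?_⟩
        · exact Finset.notMem_erase v V (by rwa [h])
        · rw [Finset.card_erase_of_mem hv]
          omega
      · rw [eulerSum_simplexBoundary hne hVn, hd, pow_succ]
        ring
      · obtain ⟨W, rfl⟩ := exists_map_vertexEmb_eq hVn
        rw [Finset.card_map] at hd
        convert lefschetzData_simplexBoundary (K := K) hd using 1
        ext F
        simp [mem_pullback]
    · obtain ⟨v, rfl⟩ := Finset.card_eq_one.1 (le_antisymm hc hne.card_pos)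
      have : {F : Finset ℕ | F ⊆ {v} ∧ F ≠ {v}} = {∅} := by
        ext F
        simp only [Set.mem_ofPred_eq, Finset.subset_singleton_iff, Set.mem_singleton_iff]
        constructor
        · tauto
        · rintro rfl
          exact ⟨Or.inl rfl, (Finset.singleton_ne_empty v).symm⟩
      rw [this]
      exact hempty
  | contract Γ i j hij hpure hedge hlc _ _ ihC ihL =>
    have hi : i ∈ Finset.Icc 1 n := hV _ hedge (by simp)
    have hj : j ∈ Finset.Icc 1 n := hV _ hedge (by simp)
    have hcon := isContraction_contraction hdown hij.ne hlc
    obtain ⟨dC, hC, hpC, heC, HC⟩ := ihC (fun F hF => by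
      rcases mem_contraction.1 hF with h | ⟨G, hG, -, rfl⟩
      · exact hV F h.1
      · exact Finset.union_subset ((Finset.erase_subset _ _).trans (hV G hG)) (by simpa using hj))
      (contraction_down_closed hdown hij.ne)
    obtain ⟨dL, hL, hpL, -, HL⟩ := ihL
      (fun F hF => Finset.subset_union_left.trans (hV _ hF.2)) (linkOf_down_closed hdown _)
    obtain ⟨d, hd⟩ := exists_pureOfCard hV hpure ⟨_, hedge⟩
    obtain rfl : dC = d := hd.contraction hdown hij.ne hj hpC hedge (by rw [heC]; simp)
    obtain rfl := hd.linkOf_pair hij.ne hpL hedge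
    refine ⟨dL + 2, hC + delay hL, hd, (hcon.eulerSum_eq hdown hi hj).trans heC, ?_⟩
    obtain ⟨a, rfl⟩ := exists_vertexEmb_eq hi
    obtain ⟨b, rfl⟩ := exists_vertexEmb_eq hj
    exact .of_isContraction hcon.pullback (pullback_down_closed hdown) HC HL

end Contraction

end StrongEdge

namespace StrongEdge

open MvPolynomial

/-! ### Hilbert functions of graded quotients -/

section QuotPiece

variable {K : Type*} [Field K] {n : ℕ}

lemma finrank_map_add_finrank_inf_ker {V W : Type*} [AddCommGroup V] [Module K V]
    [AddCommGroup W] [Module K W] (f : V →ₗ[K] W) (p : Submodule K V) [FiniteDimensional K p] :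
    Module.finrank K (p.map f) + Module.finrank K ↥(p ⊓ LinearMap.ker f) = Module.finrank K p := by
  rw [← LinearMap.finrank_range_add_finrank_ker (f.domRestrict p), LinearMap.range_domRestrict,
    LinearMap.ker_domRestrict, ← Submodule.map_comap_subtype,
    Submodule.finrank_map_subtype_eq]

lemma mem_quotPiece {I : Ideal (MvPolynomial (Fin n) K)} {k : ℕ} {x : MvPolynomial (Fin n) K ⧸ I} :
    x ∈ quotPiece I k ↔ ∃ y : MvPolynomial (Fin n) K, y.IsHomogeneous k ∧
      Ideal.Quotient.mk I y = x := Iff.rfl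

instance (I : Ideal (MvPolynomial (Fin n) K)) (k : ℕ) : FiniteDimensional K (quotPiece I k) :=
  Module.Finite.iff_fg.2 ((homogeneousSubmodule_fg (Fin n) K k).map _)

lemma quotPiece_eq_bot_iff {I : Ideal (MvPolynomial (Fin n) K)} {k : ℕ} :
    quotPiece I k = ⊥ ↔ CodimLE I k 0 := by
  rw [codimLE_zero_iff, Submodule.eq_bot_iff]
  constructor
  · exact fun H s hs => Ideal.Quotient.eq_zero_iff_mem.1 (H _ (mem_quotPiece.2 ⟨s, hs, rfl⟩))
  · rintro H _ ⟨s, hs, rfl⟩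
    exact Ideal.Quotient.eq_zero_iff_mem.2 (H s hs)

lemma finrank_quotPiece_le {I : Ideal (MvPolynomial (Fin n) K)} {k b : ℕ} (h : CodimLE I k b) :
    Module.finrank K (quotPiece I k) ≤ b := by
  obtain ⟨T, hT, H⟩ := h
  have hle : quotPiece I k ≤ Submodule.span K (Set.range fun a => Ideal.Quotient.mk I (T a)) := by
    rintro _ ⟨s, hs, rfl⟩
    obtain ⟨c, hc⟩ := H s hs
    have : Ideal.Quotient.mk I s = ∑ a, c a • Ideal.Quotient.mk I (T a) := by
      rw [Ideal.Quotient.eq.2 hc, map_sum]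
      rfl
    change Ideal.Quotient.mk I s ∈ _
    rw [this]
    exact Submodule.sum_mem _ fun a _ => Submodule.smul_mem _ _ (Submodule.subset_span ⟨a, rfl⟩)
  have := FiniteDimensional.span_of_finite K
    (Set.finite_range fun a => Ideal.Quotient.mk I (T a))
  refine (Submodule.finrank_mono hle).trans ?_
  exact (finrank_range_le_card _).trans (Fintype.card_fin b).le

lemma coeff_eq_zero_of_mem_faceIdeal {Γ : Set (Finset (Fin n))}
    (hdown : ∀ F ∈ Γ, ∀ G, G ⊆ F → G ∈ Γ) {x : MvPolynomial (Fin n) K} (hx : x ∈ faceIdeal K Γ)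
    {m : Fin n →₀ ℕ} (hm : m.support ∈ Γ) : coeff m x = 0 := by
  classical
  rw [faceIdeal] at hx
  induction hx using Submodule.span_induction generalizing m with
  | zero => simp
  | add y z _ _ hy hz => rw [coeff_add, hy hm, hz hm, add_zero]
  | mem x hx =>
    obtain ⟨F, hF, rfl⟩ := hx
    have hmon : faceMon K F = monomial (∑ a ∈ F, Finsupp.single a 1) 1 := by
      rw [monomial_sum_one]
      rfl
    rw [hmon, coeff_monomial, if_neg]
    rintro rfl
    refine hF (hdown _ hm _ fun a ha => ?_)
    simp [Finsupp.finsetSum_apply, Finsupp.single_apply, ha]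
  | smul a x _ hx =>
    rw [smul_eq_mul, coeff_mul]
    refine Finset.sum_eq_zero fun p hp => ?_
    have hle : p.2 ≤ m := (Finset.HasAntidiagonal.mem_antidiagonal.1 hp) ▸ le_add_self
    rw [hx (hdown _ hm _ (Finsupp.support_mono hle)), mul_zero]

lemma hilb_le_finrank {Γ : Set (Finset (Fin n))} (hdown : ∀ F ∈ Γ, ∀ G, G ⊆ F → G ∈ Γ) (k : ℕ) :
    hilb Γ k ≤ Module.finrank K (quotPiece (faceIdeal K Γ) k) := by
  let v : faceExponents Γ k → quotPiece (faceIdeal K Γ) k := fun m =>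
    ⟨Ideal.Quotient.mk _ (monomial m.1 1),
      mem_quotPiece.2 ⟨_, isHomogeneous_monomial _ (mem_faceExponents.1 m.2).1, rfl⟩⟩
  have hv : LinearIndependent K v := by
    rw [Fintype.linearIndependent_iff]
    intro g hg m
    have h0 : ∑ i, g i • (monomial i.1 1 : MvPolynomial (Fin n) K) ∈ faceIdeal K Γ := by
      rw [← Ideal.Quotient.eq_zero_iff_mem, map_sum]
      have := congrArg Subtype.val hg
      rw [Submodule.coe_sum] at this
      exact this
    have h1 := coeff_eq_zero_of_mem_faceIdeal hdown h0 (mem_faceExponents.1 m.2).2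
    simpa [coeff_sum, coeff_smul, coeff_monomial, Subtype.val_inj] using h1
  simpa [hilb] using hv.fintype_card_le_finrank

variable {L : Ideal (MvPolynomial (Fin n) K)} {x : MvPolynomial (Fin n) K}

lemma exists_sub_mul_mem (hL : IsGraded L) (hx : x.IsHomogeneous 1) {k : ℕ}
    {y : MvPolynomial (Fin n) K} (hy : y.IsHomogeneous (k + 1))
    (hyL : y ∈ L ⊔ Ideal.span {x}) : ∃ a, a.IsHomogeneous k ∧ y - a * x ∈ L := by
  obtain ⟨l, hl, b, hb, rfl⟩ := Submodule.mem_sup.1 hyL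
  obtain ⟨a, rfl⟩ := Ideal.mem_span_singleton'.1 hb
  refine ⟨homogeneousComponent k a, homogeneousComponent_isHomogeneous _ _, ?_⟩
  have h1 := homogeneousComponent_eq_self hy
  rw [map_add, homogeneousComponent_mul_of_isHomogeneous hx, if_pos (by omega),
    Nat.add_sub_cancel] at h1
  rw [← h1, add_sub_cancel_right]
  exact hL l hl _

lemma mem_of_mem_sup_span_of_degree_zero (hL : IsGraded L) (hx : x.IsHomogeneous 1)
    {y : MvPolynomial (Fin n) K} (hy : y.IsHomogeneous 0)
    (hyL : y ∈ L ⊔ Ideal.span {x}) : y ∈ L := by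
  obtain ⟨l, hl, b, hb, rfl⟩ := Submodule.mem_sup.1 hyL
  obtain ⟨a, rfl⟩ := Ideal.mem_span_singleton'.1 hb
  have h1 := homogeneousComponent_eq_self hy
  rw [map_add, homogeneousComponent_mul_of_isHomogeneous hx, if_neg (by omega), add_zero] at h1
  rw [← h1]
  exact hL l hl _

/-- The Hilbert function of the quotient by `L`. -/
noncomputable def quotHilb (L : Ideal (MvPolynomial (Fin n) K)) (k : ℕ) : ℕ :=
  Module.finrank K (quotPiece L k)

/-- Multiplication by the class of `x` modulo `L`. -/
noncomputable def mulQuot (L : Ideal (MvPolynomial (Fin n) K)) (x : MvPolynomial (Fin n) K) :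
    (MvPolynomial (Fin n) K ⧸ L) →ₗ[K] MvPolynomial (Fin n) K ⧸ L :=
  LinearMap.mulRight K (Ideal.Quotient.mk L x)

lemma map_factor_quotPiece {L L' : Ideal (MvPolynomial (Fin n) K)} (h : L ≤ L') (k : ℕ) :
    (quotPiece L k).map (Ideal.Quotient.factorₐ K h).toLinearMap = quotPiece L' k := by
  rw [quotPiece, quotPiece, ← Submodule.map_comp]
  rfl

lemma quotPiece_inf_ker (hL : IsGraded L) (hx : x.IsHomogeneous 1) (k : ℕ) :
    quotPiece L (k + 1) ⊓ LinearMap.ker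
      (Ideal.Quotient.factorₐ K (le_sup_left : L ≤ L ⊔ Ideal.span {x})).toLinearMap =
    (quotPiece L k).map (mulQuot L x) := by
  ext y
  constructor
  · rintro ⟨⟨y, hy, rfl⟩, hyL⟩
    obtain ⟨a, ha, hya⟩ := exists_sub_mul_mem hL hx hy (Ideal.Quotient.eq_zero_iff_mem.1 hyL)
    exact ⟨_, ⟨a, ha, rfl⟩, (Ideal.Quotient.eq.2 hya).symm⟩
  · rintro ⟨_, ⟨a, ha, rfl⟩, rfl⟩
    refine ⟨⟨a * x, ha.mul hx, rfl⟩, Ideal.Quotient.eq_zero_iff_mem.2 ?_⟩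
    exact Ideal.mem_sup_right (Ideal.mem_span_singleton'.2 ⟨a, rfl⟩)

lemma quotHilb_succ (hL : IsGraded L) (hx : x.IsHomogeneous 1) (k : ℕ) :
    quotHilb L (k + 1) + Module.finrank K ↥(quotPiece L k ⊓ LinearMap.ker (mulQuot L x)) =
      quotHilb (L ⊔ Ideal.span {x}) (k + 1) + quotHilb L k := by
  have h1 := finrank_map_add_finrank_inf_ker (Ideal.Quotient.factorₐ K
    (le_sup_left : L ≤ L ⊔ Ideal.span {x})).toLinearMap (quotPiece L (k + 1))
  rw [map_factor_quotPiece, quotPiece_inf_ker hL hx] at h1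
  have h2 := finrank_map_add_finrank_inf_ker (mulQuot L x) (quotPiece L k)
  simp only [quotHilb]
  omega

lemma quotHilb_zero (hL : IsGraded L) (hx : x.IsHomogeneous 1) :
    quotHilb L 0 = quotHilb (L ⊔ Ideal.span {x}) 0 := by
  have h1 := finrank_map_add_finrank_inf_ker (Ideal.Quotient.factorₐ K
    (le_sup_left : L ≤ L ⊔ Ideal.span {x})).toLinearMap (quotPiece L 0)
  have h2 : quotPiece L 0 ⊓ LinearMap.ker
      (Ideal.Quotient.factorₐ K (le_sup_left : L ≤ L ⊔ Ideal.span {x})).toLinearMap = ⊥ := by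
    rw [Submodule.eq_bot_iff]
    rintro _ ⟨⟨y, hy, rfl⟩, hyL⟩
    exact Ideal.Quotient.eq_zero_iff_mem.2 (mem_of_mem_sup_span_of_degree_zero hL hx hy
      (Ideal.Quotient.eq_zero_iff_mem.1 hyL))
  rw [map_factor_quotPiece, h2, finrank_bot, add_zero] at h1
  exact h1.symm

lemma quotHilb_le_partialSums (hL : IsGraded L) (hx : x.IsHomogeneous 1) :
    quotHilb L ≤ partialSums (quotHilb (L ⊔ Ideal.span {x})) := by
  intro k
  change quotHilb L k ≤ partialSums (quotHilb (L ⊔ Ideal.span {x})) k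
  induction k with
  | zero => rw [partialSums_zero, quotHilb_zero hL hx]
  | succ k ih =>
    have := quotHilb_succ hL hx k
    rw [partialSums_succ]
    omega

/-- A linear form that decreases the Hilbert function as much as possible is a nonzerodivisor. -/
lemma mem_of_mul_mem (hL : IsGraded L) (hx : x.IsHomogeneous 1)
    (h : quotHilb L = partialSums (quotHilb (L ⊔ Ideal.span {x}))) {y : MvPolynomial (Fin n) K}
    (hy : y * x ∈ L) : y ∈ L := by
  rw [← sum_homogeneousComponent y]
  refine Ideal.sum_mem _ fun k _ => ?_
  have hk := hL _ hy (k + 1)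
  rw [homogeneousComponent_mul_of_isHomogeneous hx, if_pos (by omega), Nat.add_sub_cancel] at hk
  have h1 := quotHilb_succ hL hx k
  rw [h, partialSums_succ] at h1
  have h2 : quotPiece L k ⊓ LinearMap.ker (mulQuot L x) = ⊥ := by
    rw [← Submodule.finrank_eq_zero (R := K)]
    omega
  rw [← Ideal.Quotient.eq_zero_iff_mem, ← Submodule.mem_bot K, ← h2]
  exact ⟨⟨_, homogeneousComponent_isHomogeneous _ _, rfl⟩,
    Ideal.Quotient.eq_zero_iff_mem.2 hk⟩

end QuotPiece

end StrongEdge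

namespace StrongEdge

open MvPolynomial

/-! ### Regular sequences -/

section Regular

variable {K : Type*} [Field K] {n : ℕ} {I : Ideal (MvPolynomial (Fin n) K)}
  {rs : List (MvPolynomial (Fin n) K)}

lemma isGraded_sup_ofList (hI : IsGraded I) (hrs : ∀ x ∈ rs, x.IsHomogeneous 1) :
    IsGraded (I ⊔ Ideal.ofList rs) :=
  hI.sup (isGraded_span fun x hx => ⟨1, hrs x hx⟩)

lemma ofList_take_succ {r : ℕ} (hr : r < rs.length) :
    I ⊔ Ideal.ofList (rs.take (r + 1)) = I ⊔ Ideal.ofList (rs.take r) ⊔ Ideal.span {rs[r]} := by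
  rw [List.take_succ_eq_append_getElem hr, Ideal.ofList_append, Ideal.ofList_singleton, sup_assoc]

lemma iterate_partialSums_quotHilb_mono (hI : IsGraded I) (hrs : ∀ x ∈ rs, x.IsHomogeneous 1)
    {r m : ℕ} (hrm : r ≤ m) (hm : m ≤ rs.length) :
    partialSums^[r] (quotHilb (I ⊔ Ideal.ofList (rs.take r))) ≤
      partialSums^[m] (quotHilb (I ⊔ Ideal.ofList (rs.take m))) := by
  induction m, hrm using Nat.le_induction with
  | base => exact le_rfl
  | succ m _ ih =>
    refine (ih (by omega)).trans ?_
    rw [Function.iterate_succ_apply, ofList_take_succ hm]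
    exact partialSums_mono.iterate m (quotHilb_le_partialSums
      (isGraded_sup_ofList hI fun x hx => hrs x (List.mem_of_mem_take hx))
      (hrs _ (List.getElem_mem _)))

lemma mem_of_mul_getElem_mem (hI : IsGraded I) (hrs : ∀ x ∈ rs, x.IsHomogeneous 1)
    (h : partialSums^[rs.length] (quotHilb (I ⊔ Ideal.ofList rs)) ≤ quotHilb I) {r : ℕ}
    (hr : r < rs.length) {y : MvPolynomial (Fin n) K}
    (hy : y * rs[r] ∈ I ⊔ Ideal.ofList (rs.take r)) : y ∈ I ⊔ Ideal.ofList (rs.take r) := by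
  have h0 := iterate_partialSums_quotHilb_mono hI hrs (Nat.zero_le r) hr.le
  have h1 := iterate_partialSums_quotHilb_mono hI hrs (Nat.le_succ r) hr
  have h2 := iterate_partialSums_quotHilb_mono hI hrs hr le_rfl
  rw [List.take_zero, Ideal.ofList_nil, sup_bot_eq, Function.iterate_zero, id] at h0
  rw [List.take_length] at h2
  have h3 := h1.antisymm (h2.trans (h.trans h0))
  rw [Function.iterate_succ_apply, ofList_take_succ hr] at h3
  exact mem_of_mul_mem (isGraded_sup_ofList hI fun x hx => hrs x (List.mem_of_mem_take hx))
    (hrs _ (List.getElem_mem _)) (partialSums_injective.iterate r h3) hy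

lemma mk_mem_map_iff {J : Ideal (MvPolynomial (Fin n) K)} {y : MvPolynomial (Fin n) K} :
    Ideal.Quotient.mk I y ∈ J.map (Ideal.Quotient.mk I) ↔ y ∈ I ⊔ J := by
  rw [← Ideal.mem_comap, Ideal.comap_map_of_surjective _ Ideal.Quotient.mk_surjective,
    ← RingHom.ker_eq_comap_bot, Ideal.mk_ker, sup_comm]

theorem isRegular_of_quotHilb (hI : IsGraded I) (hrs : ∀ x ∈ rs, x.IsHomogeneous 1)
    (h : partialSums^[rs.length] (quotHilb (I ⊔ Ideal.ofList rs)) ≤ quotHilb I)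
    (h1 : 1 ∉ I ⊔ Ideal.ofList rs) :
    RingTheory.Sequence.IsRegular (MvPolynomial (Fin n) K ⧸ I)
      (rs.map (Ideal.Quotient.mk I)) where
  regular_mod_prev r hr := by
    rw [List.length_map] at hr
    rw [isSMulRegular_quotient_iff_mem_of_smul_mem, smul_eq_mul, Ideal.mul_top, ← List.map_take,
      ← Ideal.map_ofList, List.getElem_map]
    intro y hy
    obtain ⟨y, rfl⟩ := Ideal.Quotient.mk_surjective y
    rw [smul_eq_mul, ← map_mul, mk_mem_map_iff, mul_comm] at hy
    exact mk_mem_map_iff.2 (mem_of_mul_getElem_mem hI hrs h hr hy)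
  top_ne_smul H := by
    rw [smul_eq_mul, Ideal.mul_top, ← Ideal.map_ofList] at H
    refine h1 (mk_mem_map_iff.1 ?_)
    rw [← H]
    trivial

end Regular

/-! ### Krull dimensions -/

section Dimension

variable {K : Type*} [Field K] {n : ℕ}

lemma ringKrullDim_le_of_forall_prime {A : Type*} [CommRing A] {m : WithBot ℕ∞}
    (h : ∀ p : Ideal A, p.IsPrime → ringKrullDim (A ⧸ p) ≤ m) : ringKrullDim A ≤ m := by
  refine iSup_le fun l => ?_
  refine le_trans ?_ (h l.head.asIdeal l.head.isPrime)
  rw [ringKrullDim_quotient]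
  let l' : LTSeries (PrimeSpectrum.zeroLocus (R := A) l.head.asIdeal) :=
    { length := l.length
      toFun := fun i => ⟨l i, l.head_le i⟩
      step := fun i => l.step i }
  exact Order.LTSeries.length_le_krullDim l'

lemma ringKrullDim_mvPolynomial_finset (F : Finset (Fin n)) :
    ringKrullDim (MvPolynomial F K) = F.card := by
  rw [MvPolynomial.ringKrullDim_of_isNoetherianRing, ringKrullDim_eq_zero_of_field, zero_add,
    Nat.card_eq_fintype_card, Fintype.card_coe]

variable {Γ : Set (Finset (Fin n))}

lemma ringKrullDim_faceRing_le {d : ℕ} (hd : ∀ F ∈ Γ, F.card ≤ d) :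
    ringKrullDim (MvPolynomial (Fin n) K ⧸ faceIdeal K Γ) ≤ d := by
  classical
  refine ringKrullDim_le_of_forall_prime fun p hp => ?_
  let q : Fin n → (MvPolynomial (Fin n) K ⧸ faceIdeal K Γ) ⧸ p := fun v =>
    Ideal.Quotient.mk p (Ideal.Quotient.mk _ (X v))
  let F : Finset (Fin n) := Finset.univ.filter fun v => q v ≠ 0
  have hF : F ∈ Γ := by
    by_contra hF
    have h0 : Ideal.Quotient.mk p (Ideal.Quotient.mk _ (faceMon K F)) = 0 := by
      rw [Ideal.Quotient.eq_zero_iff_mem.2 (faceMon_mem_faceIdeal hF), map_zero]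
    rw [faceMon, map_prod, map_prod, Finset.prod_eq_zero_iff] at h0
    obtain ⟨v, hv, hv0⟩ := h0
    exact (Finset.mem_filter.1 hv).2 hv0
  let f : MvPolynomial F K →ₐ[K] (MvPolynomial (Fin n) K ⧸ faceIdeal K Γ) ⧸ p :=
    aeval fun v => q v
  have hf : Function.Surjective f := by
    intro y
    obtain ⟨y, rfl⟩ := Ideal.Quotient.mk_surjective y
    obtain ⟨y, rfl⟩ := Ideal.Quotient.mk_surjective y
    change _ ∈ f.range
    induction y using MvPolynomial.induction_on with
    | C a => exact f.range.algebraMap_mem a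
    | add y z hy hz =>
      rw [map_add, map_add]
      exact add_mem hy hz
    | mul_X y v hy =>
      rw [map_mul, map_mul]
      refine mul_mem hy ?_
      change q v ∈ _
      by_cases hv : q v = 0
      · rw [hv]
        exact zero_mem _
      · exact ⟨X ⟨v, by simp [F, hv]⟩, by simp [f]⟩
  refine (ringKrullDim_le_of_surjective f.toRingHom hf).trans ?_
  rw [ringKrullDim_mvPolynomial_finset]
  exact_mod_cast hd F hF

lemma card_le_ringKrullDim_faceRing (hdown : ∀ F ∈ Γ, ∀ G, G ⊆ F → G ∈ Γ) {F : Finset (Fin n)}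
    (hF : F ∈ Γ) : F.card ≤ ringKrullDim (MvPolynomial (Fin n) K ⧸ faceIdeal K Γ) := by
  classical
  let f : MvPolynomial (Fin n) K →ₐ[K] MvPolynomial F K :=
    aeval fun v => if h : v ∈ F then X ⟨v, h⟩ else 0
  have hf : ∀ x ∈ faceIdeal K Γ, f x = 0 := by
    suffices faceIdeal K Γ ≤ RingHom.ker f from this
    rw [faceIdeal, Ideal.span_le]
    rintro _ ⟨G, hG, rfl⟩
    obtain ⟨v, hv, hvF⟩ := Finset.not_subset.1 fun h => hG (hdown F hF G h)
    rw [SetLike.mem_coe, RingHom.mem_ker, faceMon, map_prod]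
    exact Finset.prod_eq_zero hv (by simp [f, hvF])
  rw [← ringKrullDim_mvPolynomial_finset (K := K) F]
  refine ringKrullDim_le_of_surjective (Ideal.Quotient.lift _ f.toRingHom hf)
    (Ideal.Quotient.lift_surjective_of_surjective _ _ fun y => ⟨rename (↑) y, ?_⟩)
  change f (rename _ y) = y
  rw [aeval_rename]
  convert aeval_X_left_apply y using 2
  ext v
  simp

lemma ringKrullDim_le_zero_of_codimLE {L : Ideal (MvPolynomial (Fin n) K)} {m : ℕ}
    (h : CodimLE L m 0) : ringKrullDim (MvPolynomial (Fin n) K ⧸ L) ≤ 0 := by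
  have htop : ⨆ k : Fin m, quotPiece L k = ⊤ := by
    rw [eq_top_iff]
    rintro x -
    obtain ⟨x, rfl⟩ := Ideal.Quotient.mk_surjective x
    rw [← sum_homogeneousComponent x, map_sum]
    refine Submodule.sum_mem _ fun k _ => ?_
    rcases Nat.lt_or_ge k m with hk | hk
    · exact Submodule.mem_iSup_of_mem ⟨k, hk⟩
        (mem_quotPiece.2 ⟨_, homogeneousComponent_isHomogeneous _ _, rfl⟩)
    · rw [Ideal.Quotient.eq_zero_iff_mem.2
        (codimLE_zero_iff.1 (h.of_le hk) _ (homogeneousComponent_isHomogeneous _ _))]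
      exact zero_mem _
  have : Module.Finite K (MvPolynomial (Fin n) K ⧸ L) := by
    rw [Module.finite_def, ← htop]
    exact Submodule.fg_iSup _ fun k => Module.Finite.iff_fg.1 inferInstance
  have : IsArtinianRing (MvPolynomial (Fin n) K ⧸ L) := IsArtinianRing.of_finite K _
  exact_mod_cast Ring.krullDimLE_iff.1 (isArtinianRing_iff_krullDimLE_zero.1 this)

end Dimension

end StrongEdge

namespace StrongEdge

open MvPolynomial

/-! ### The strong Lefschetz property -/

section StrongLefschetz

variable {K : Type*} [Field K] {n : ℕ}

lemma ofList_ofFn {d : ℕ} (θ : Fin d → MvPolynomial (Fin n) K) :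
    Ideal.ofList (List.ofFn θ) = Ideal.span (Set.range θ) := by
  exact congrArg Ideal.span (Set.ext fun x => List.mem_ofFn' _ _)

lemma bijOn_quotPiece {L : Ideal (MvPolynomial (Fin n) K)} (hL : IsGraded L)
    {g : MvPolynomial (Fin n) K} {e i : ℕ} (hg : g.IsHomogeneous e)
    (hsurj : CodimLE (L ⊔ Ideal.span {g}) (i + e) 0) (hdim : quotHilb L (i + e) = quotHilb L i) :
    Set.BijOn (fun x => Ideal.Quotient.mk L g * x) (quotPiece L i) (quotPiece L (i + e)) := by
  have hmap : (quotPiece L i).map (mulQuot L g) = quotPiece L (i + e) := by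
    refine le_antisymm ?_ ?_
    · rintro _ ⟨_, ⟨a, ha, rfl⟩, rfl⟩
      exact ⟨a * g, IsHomogeneous.mul ha hg, rfl⟩
    · rintro _ ⟨y, hy, rfl⟩
      obtain ⟨l, hl, b, hb, hlb⟩ := Submodule.mem_sup.1 (codimLE_zero_iff.1 hsurj y hy)
      obtain ⟨a, rfl⟩ := Ideal.mem_span_singleton'.1 hb
      refine ⟨_, ⟨_, homogeneousComponent_isHomogeneous i a, rfl⟩, Ideal.Quotient.eq.2 ?_⟩
      have h1 := homogeneousComponent_eq_self hy
      rw [← hlb, map_add, homogeneousComponent_mul_of_isHomogeneous hg, if_pos (by omega),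
        Nat.add_sub_cancel, hlb] at h1
      rw [← h1, sub_add_cancel_right]
      exact neg_mem (hL l hl _)
  have hker : quotPiece L i ⊓ LinearMap.ker (mulQuot L g) = ⊥ := by
    have := finrank_map_add_finrank_inf_ker (mulQuot L g) (quotPiece L i)
    rw [hmap] at this
    rw [← Submodule.finrank_eq_zero (R := K)]
    simp only [quotHilb] at hdim
    omega
  have hcomm : ∀ x, Ideal.Quotient.mk L g * x = mulQuot L g x := fun x => mul_comm _ _
  simp only [hcomm]
  refine ⟨fun x hx => hmap ▸ ⟨x, hx, rfl⟩, fun x hx y hy hxy => ?_, fun x hx => ?_⟩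
  · rw [← sub_eq_zero, ← Submodule.mem_bot K, ← hker]
    exact ⟨sub_mem hx hy, LinearMap.mem_ker.2 ((map_sub _ _ _).trans (sub_eq_zero.2 hxy))⟩
  · rw [← hmap] at hx
    exact hx

theorem LefschetzData.hasSLPIdeal {Γ : Set (Finset (Fin n))} {d : ℕ} {h : ℕ → ℕ}
    (H : LefschetzData K Γ d h) (hdown : ∀ F ∈ Γ, ∀ G, G ⊆ F → G ∈ Γ)
    (hd : ∀ F ∈ Γ, F.card ≤ d) {F : Finset (Fin n)} (hF : F ∈ Γ) (hFd : F.card = d) :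
    HasSLPIdeal (faceIdeal K Γ) := by
  obtain ⟨θ, ω, hθ, hω, hS⟩ := H.params
  rw [satisfies_lefschetzBounds] at hS
  obtain ⟨hcod, hlef⟩ := hS
  have hI : IsGraded (faceIdeal K Γ) := isGraded_faceIdeal Γ
  have hL := hI.sup (isGraded_span_range hθ)
  have hvan : CodimLE (faceIdeal K Γ ⊔ Ideal.span (Set.range θ)) (d + 1) 0 := by
    have := hcod (d + 1) le_rfl
    rwa [H.eq_zero _ (Nat.lt_succ_self d)] at this
  have hle : quotHilb (faceIdeal K Γ ⊔ Ideal.span (Set.range θ)) ≤ h := by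
    intro k
    rcases Nat.lt_or_ge (d + 1) k with hk | hk
    · refine finrank_quotPiece_le ?_
      rw [H.eq_zero k (by omega)]
      exact hvan.of_le hk.le
    · exact finrank_quotPiece_le (hcod k hk)
  have hhilb : partialSums^[d] h ≤ quotHilb (faceIdeal K Γ) :=
    H.le_hilb.trans fun k => hilb_le_finrank hdown k
  have hrs : ∀ x ∈ List.ofFn θ, x.IsHomogeneous 1 := by
    intro x hx
    obtain ⟨a, rfl⟩ := (List.mem_ofFn' _ _).1 hx
    exact hθ a
  have hmono := iterate_partialSums_quotHilb_mono hI hrs (Nat.zero_le _) le_rfl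
  rw [List.take_zero, Ideal.ofList_nil, sup_bot_eq, Function.iterate_zero, id, List.take_length,
    List.length_ofFn, ofList_ofFn] at hmono
  have heq : quotHilb (faceIdeal K Γ ⊔ Ideal.span (Set.range θ)) = h :=
    partialSums_injective.iterate d
      ((partialSums_mono.iterate d hle).antisymm (hhilb.trans hmono))
  have hne : quotPiece (faceIdeal K Γ ⊔ Ideal.span (Set.range θ)) d ≠ ⊥ := by
    intro h0
    have h1 := congrFun heq d
    rw [quotHilb, h0, finrank_bot] at h1
    have h2 := H.symm 0 (Nat.zero_le d)
    rw [Nat.sub_zero, H.zero] at h2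
    omega
  have hone : 1 ∉ faceIdeal K Γ ⊔ Ideal.span (Set.range θ) := by
    intro h1
    refine hne (quotPiece_eq_bot_iff.2 (codimLE_zero_iff.2 fun s _ => ?_))
    rw [(Ideal.eq_top_iff_one _).2 h1]
    trivial
  have hdimA : ringKrullDim (MvPolynomial (Fin n) K ⧸ faceIdeal K Γ) = d :=
    (ringKrullDim_faceRing_le hd).antisymm (hFd ▸ card_le_ringKrullDim_faceRing hdown hF)
  have hlsop : IsLSOP (faceIdeal K Γ) d θ := ⟨hθ, ringKrullDim_le_zero_of_codimLE hvan⟩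
  refine ⟨⟨d, hdimA, θ, hlsop, isRegular_of_quotHilb hI hrs ?_ ?_⟩, d, hdimA, θ, hlsop, ω, hω, d,
    ⟨hne, fun k hk => ?_⟩, fun i hi => ?_⟩
  · rw [List.length_ofFn, ofList_ofFn, heq]
    exact hhilb
  · rwa [ofList_ofFn]
  · exact quotPiece_eq_bot_iff.2 (hvan.of_le hk)
  · have hdi : d - i = i + (d - 2 * i) := by omega
    have hc := hlef i hi
    have hs := H.symm i (by omega)
    rw [Nat.sub_zero, hdi] at hc
    rw [hdi] at hs ⊢
    simp only [← map_pow]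
    exact bijOn_quotPiece hL (by simpa using hω.pow (d - 2 * i)) hc (by rw [heq, hs])

end StrongLefschetz

section Complexes

variable {Γ : Set (Finset ℕ)}

lemma hvec_self {V : Finset ℕ} (hV : ∀ F ∈ Γ, F ⊆ V) {d : ℕ} (hd : ∀ F ∈ Γ, F.card ≤ d) :
    hvec d Γ d = (-1) ^ d * eulerSum V Γ := by
  classical
  have hf : ∀ j, fvec Γ j = ((V.powerset.filter (· ∈ Γ)).filter fun F => F.card = j).card := by
    intro j
    rw [fvec, ← Set.ncard_coe_finset]
    congr 1
    ext F
    simp only [Set.mem_ofPred_eq, Finset.coe_filter, Finset.mem_filter, Finset.mem_powerset]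
    exact ⟨fun h => ⟨⟨hV F h.1, h.1⟩, h.2⟩, fun h => ⟨h.1.2, h.2⟩⟩
  have hE : eulerSum V Γ = ∑ F ∈ V.powerset.filter (· ∈ Γ), (-1) ^ F.card := by
    rw [eulerSum, Finset.sum_filter]
  rw [hE, ← Finset.sum_fiberwise_of_maps_to (g := Finset.card) (t := Finset.range (d + 1))
    fun F hF => Finset.mem_range.2 (Nat.lt_succ_of_le (hd F (Finset.mem_filter.1 hF).2)), hvec,
    Finset.mul_sum]
  refine Finset.sum_congr rfl fun j hj => ?_
  have hjd : j ≤ d := Nat.lt_succ_iff.1 (Finset.mem_range.1 hj)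
  rw [Finset.sum_congr rfl fun F hF => by rw [(Finset.mem_filter.1 hF).2], Finset.sum_const,
    ← hf, Nat.sub_self, Nat.choose_zero_right, Nat.cast_one, mul_one, nsmul_eq_mul]
  have hsign : (-1 : ℤ) ^ (d - j) = (-1) ^ d * (-1) ^ j := by
    obtain ⟨k, rfl⟩ := Nat.exists_eq_add_of_le hjd
    rw [Nat.add_sub_cancel_left, pow_add, mul_right_comm, ← mul_pow]
    simp
  rw [hsign]
  ring

lemma PureOfCard.sdim_eq {d : ℕ} (h : PureOfCard Γ d) (hne : Γ.Nonempty) :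
    sdim Γ = (d : ℤ) - 1 := by
  obtain ⟨F, hF⟩ := hne
  obtain ⟨G, hG, -, hGd⟩ := h.2 F hF
  refine IsGreatest.csSup_eq ⟨⟨G, hG, by simp [hGd]⟩, ?_⟩
  rintro _ ⟨F, hF, rfl⟩
  have := h.1 F hF
  simp only
  omega

end Complexes

end StrongEdge

/-- Corollary 3.4 / 4.7. Strongly edge decomposable complexes are
Cohen–Macaulay and have the strong Lefschetz property over any infinite field. -/
theorem stmt10 (K : Type) [Field K] (hK : Infinite K) (n d : ℕ) (Γ : Set (Finset ℕ))
    (hΓ : SimplicialComplexOn (Finset.Icc 1 n) Γ)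
    (hdim : sdim Γ = (d : ℤ) - 1)
    (hsed : StronglyEdgeDecomposable Γ) :
    ComplexCM K n Γ ∧ ComplexSLP K n d Γ := by
  obtain ⟨hV, -, hdown⟩ := hΓ
  obtain ⟨d', h, hpure, heuler, H⟩ := StrongEdge.exists_lefschetzData K hsed hV hdown
  have hne : Γ.Nonempty := by
    rw [Set.nonempty_iff_ne_empty]
    rintro rfl
    simp [StrongEdge.eulerSum] at heuler
    exact pow_ne_zero d' (by norm_num) heuler.symm
  obtain rfl : d' = d := by
    have := hpure.sdim_eq hne
    omega
  obtain ⟨F, hF⟩ := hne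
  obtain ⟨G, hG, -, hGd⟩ := hpure.2 F hF
  obtain ⟨G, rfl⟩ := StrongEdge.exists_map_vertexEmb_eq (hV G hG)
  have hslp := H.hasSLPIdeal (StrongEdge.pullback_down_closed hdown)
    (fun F hF => by simpa using hpure.1 _ hF) hG (by simpa using hGd)
  rw [StrongEdge.faceIdeal_pullback] at hslp
  refine ⟨hslp.1, ?_, hslp⟩
  rw [StrongEdge.hvec_self hV hpure.1, heuler, ← mul_pow]
  simp
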